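/- Let R be a Noetherian commutative ring and A an 𝔸ⁿ-fibration over R such that Ω_R(A) is a stably free A-module. Suppose W = (W₁,…,W_m) is an m-tuple residual variable of A over R. Then there exists ℓ ∈ ℕ such that the polynomial ring in ℓ variables over A is isomorphic, as an R[W]-algebra, to the polynomial ring in n − m + ℓ variables over R[W]; in particular, A is a stably polynomial algebra over R[W]. -/

import Mathlib

open TensorProduct

noncomputable section

/-- The residue field `κ(P) = R_P / P R_P` of a commutative ring `R` at a prime ideal `P`. -/
abbrev ResidueFieldAt (R : Type*) [CommRing R] (P : Ideal R) [P.IsPrime] : Type _ :=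
  IsLocalRing.ResidueField (Localization.AtPrime P)

/-- `A ⊗_R κ(P)` is a polynomial ring in `n` variables over `B ⊗_R κ(P)`
for every prime ideal `P` of `R`. -/
def FibersPolynomialOver (R B A : Type*) [CommRing R] [CommRing B] [CommRing A]
    [Algebra R B] [Algebra R A] [Algebra B A] [IsScalarTower R B A] (n : ℕ) : Prop :=
  ∀ (P : Ideal R) (_ : P.IsPrime),
    letI : Algebra (ResidueFieldAt R P ⊗[R] B) (ResidueFieldAt R P ⊗[R] A) :=
      (Algebra.TensorProduct.map (AlgHom.id R (ResidueFieldAt R P))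
        (IsScalarTower.toAlgHom R B A)).toRingHom.toAlgebra
    Nonempty ((ResidueFieldAt R P ⊗[R] A) ≃ₐ[ResidueFieldAt R P ⊗[R] B]
      MvPolynomial (Fin n) (ResidueFieldAt R P ⊗[R] B))

/-- `A` is an `𝔸ⁿ`-fibration over `R`: a finitely generated flat `R`-algebra all of whose
fibres are polynomial rings in `n` variables. -/
def IsAffineFibration (R A : Type*) [CommRing R] [CommRing A] [Algebra R A] (n : ℕ) : Prop :=
  Algebra.FiniteType R A ∧ Module.Flat R A ∧
  ∀ (P : Ideal R) (_ : P.IsPrime),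
    Nonempty ((ResidueFieldAt R P ⊗[R] A) ≃ₐ[ResidueFieldAt R P]
      MvPolynomial (Fin n) (ResidueFieldAt R P))

/-- `W` is an `m`-tuple residual variable of the `𝔸ⁿ`-fibration `A` over `R`. -/
def IsResidualVariable (R A : Type*) [CommRing R] [CommRing A] [Algebra R A]
    (n m : ℕ) (W : Fin m → A) : Prop :=
  AlgebraicIndependent R W ∧
  FibersPolynomialOver R (Algebra.adjoin R (Set.range W)) A (n - m)

/-- A module `M` over `A` is stably free if `M ⊕ Aˢ ≅ Aᵗ` for some `s, t`. -/
def IsStablyFree (A M : Type*) [CommRing A] [AddCommGroup M] [Module A M] : Prop :=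
  ∃ s t : ℕ, Nonempty ((M × (Fin s → A)) ≃ₗ[A] (Fin t → A))

end

section
open TensorProduct

namespace ResVar

section basic
variable {R C D : Type*} [CommRing R] [CommRing C] [CommRing D] [Algebra R C] [Algebra R D]

/-- Injectivity of `θ` modulo `I`, after localizing at `S`. -/
def LI (S : Submonoid R) (I : Ideal R) (θ : C →ₐ[R] D) : Prop :=
  ∀ c, ∀ s ∈ S, algebraMap R D s * θ c ∈ I.map (algebraMap R D) → c ∈ I.map (algebraMap R C)

/-- Surjectivity of `θ` modulo `I`, after localizing at `S`. -/
def LS (S : Submonoid R) (I : Ideal R) (θ : C →ₐ[R] D) : Prop :=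
  ∀ d, ∃ s ∈ S, ∃ c, algebraMap R D s * d - θ c ∈ I.map (algebraMap R D)

lemma exists_sum_of_mem_map {I : Ideal R} {x : D} (hx : x ∈ I.map (algebraMap R D)) :
    ∃ (n : ℕ) (i : Fin n → R) (d : Fin n → D), (∀ k, i k ∈ I) ∧
      x = ∑ k, algebraMap R D (i k) * d k := by
  rw [Ideal.map, Ideal.span, Submodule.mem_span_set'] at hx
  obtain ⟨n, f, g, rfl⟩ := hx
  choose i hi using fun k => (g k).2
  refine ⟨n, i, f, fun k => (hi k).1, Finset.sum_congr rfl fun k _ => ?_⟩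
  rw [(hi k).2, smul_eq_mul, mul_comm]

lemma map_mem_map (I : Ideal R) (θ : C →ₐ[R] D) {c : C} (hc : c ∈ I.map (algebraMap R C)) :
    θ c ∈ I.map (algebraMap R D) := by
  have := Ideal.mem_map_of_mem (θ : C →+* D) hc
  rw [Ideal.map_map] at this
  simpa [AlgHom.comp_algebraMap] using this

lemma smul_mem_of_flat [Module.Flat R D] {I J : Ideal R} {n : ℕ} (j : Fin n → R) (x : Fin n → D)
    (h : ∑ a, algebraMap R D (j a) * x a ∈ I.map (algebraMap R D)) :
    ∃ (k : ℕ) (y : Fin n → Fin k → R) (e : Fin k → D),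
      (∀ a, x a = ∑ b, algebraMap R D (y a b) * e b) ∧ ∀ b, ∑ a, j a * y a b ∈ I := by
  obtain ⟨m, i, d, hi, hs⟩ := exists_sum_of_mem_map h
  have key : ∑ a : Fin n ⊕ Fin m, (Sum.elim j (fun k => - i k) a) • (Sum.elim x d a) = 0 := by
    rw [Fintype.sum_sum_type]
    simp only [Sum.elim_inl, Sum.elim_inr, Algebra.smul_def, map_neg, neg_mul,
      Finset.sum_neg_distrib]
    rw [hs]; ring
  obtain ⟨k, a, y, h1, h2⟩ := Module.Flat.isTrivialRelation_of_sum_smul_eq_zero (R := R) (M := D) key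
  refine ⟨k, fun b c => a (Sum.inl b) c, y, fun b => ?_, fun b => ?_⟩
  · simpa [Algebra.smul_def] using h1 (Sum.inl b)
  · have := h2 b
    rw [Fintype.sum_sum_type] at this
    simp only [Sum.elim_inl, Sum.elim_inr, neg_mul, Finset.sum_neg_distrib] at this
    rw [add_neg_eq_zero.mp this]
    exact Ideal.sum_mem _ fun c _ => Ideal.mul_mem_right _ _ (hi c)

/-- regular elements mod `I` stay regular on flat algebras -/
lemma nz_of_flat [Module.Flat R D] {I : Ideal R} {s : R} (hs : ∀ x, s * x ∈ I → x ∈ I) {d : D}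
    (h : algebraMap R D s * d ∈ I.map (algebraMap R D)) : d ∈ I.map (algebraMap R D) := by
  obtain ⟨k, y, e, h1, h2⟩ := smul_mem_of_flat (J := I) (fun _ : Fin 1 => s) (fun _ => d)
    (by simpa using h)
  rw [h1 0]
  refine Ideal.sum_mem _ fun b _ => Ideal.mul_mem_right _ _ (Ideal.mem_map_of_mem _ (hs _ ?_))
  simpa using h2 b

lemma nilp_LS {I J : Ideal R} (hJJ : J * J ≤ I) (θ : C →ₐ[R] D)
    (hS : LS ⊥ J θ) : LS ⊥ I θ := by
  have hS' : ∀ d, ∃ c, d - θ c ∈ J.map (algebraMap R D) := by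
    intro d
    obtain ⟨s, hs, c, h⟩ := hS d
    rw [Submonoid.mem_bot] at hs; subst hs
    exact ⟨c, by simpa using h⟩
  intro d
  refine ⟨1, rfl, ?_⟩
  obtain ⟨c, hc⟩ := hS' d
  obtain ⟨n, j, x, hj, hx⟩ := exists_sum_of_mem_map hc
  choose g hg using fun a => hS' (x a)
  refine ⟨c + ∑ a, algebraMap R C (j a) * g a, ?_⟩
  have : algebraMap R D 1 * d - θ (c + ∑ a, algebraMap R C (j a) * g a) =
      ∑ a, algebraMap R D (j a) * (x a - θ (g a)) := by
    simp only [map_one, one_mul, map_add, map_sum, map_mul, AlgHom.commutes, mul_sub,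
      Finset.sum_sub_distrib, ← hx]
    ring
  rw [this]
  refine Ideal.sum_mem _ fun a _ => Ideal.map_mono hJJ ?_
  rw [Ideal.map_mul]
  exact Ideal.mul_mem_mul (Ideal.mem_map_of_mem _ (hj a)) (hg a)

lemma nilp_LI [Module.Flat R D] {I J : Ideal R} (hJJ : J * J ≤ I) (hIJ : I ≤ J) (θ : C →ₐ[R] D)
    (hI : LI ⊥ J θ) (hS : LS ⊥ J θ) : LI ⊥ I θ := by
  have hS' : ∀ d, ∃ c, d - θ c ∈ J.map (algebraMap R D) := by
    intro d
    obtain ⟨s, hs, c, h⟩ := hS d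
    rw [Submonoid.mem_bot] at hs; subst hs
    exact ⟨c, by simpa using h⟩
  have hI' : ∀ c, θ c ∈ J.map (algebraMap R D) → c ∈ J.map (algebraMap R C) := fun c hc =>
    hI c 1 rfl (by simpa using hc)
  intro c s hs hc
  rw [Submonoid.mem_bot] at hs; subst hs
  rw [map_one, one_mul] at hc
  obtain ⟨n, j, x, hj, rfl⟩ := exists_sum_of_mem_map (hI' c (Ideal.map_mono hIJ hc))
  simp only [map_sum, map_mul, AlgHom.commutes] at hc
  obtain ⟨k, y, e, h1, h2⟩ := smul_mem_of_flat (J := I) j (fun a => θ (x a)) hc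
  choose g hg using fun b => hS' (e b)
  have h3 : ∀ a, x a - ∑ b, algebraMap R C (y a b) * g b ∈ J.map (algebraMap R C) := by
    intro a
    apply hI'
    have : θ (x a - ∑ b, algebraMap R C (y a b) * g b) =
        ∑ b, algebraMap R D (y a b) * (e b - θ (g b)) := by
      simp only [map_sub, map_sum, map_mul, AlgHom.commutes, mul_sub,
        Finset.sum_sub_distrib, ← h1]
    rw [this]
    exact Ideal.sum_mem _ fun b _ => Ideal.mul_mem_left _ _ (hg b)
  have h4 : ∑ a, algebraMap R C (j a) * x a =
      ∑ a, algebraMap R C (j a) * (x a - ∑ b, algebraMap R C (y a b) * g b) +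
      ∑ b, algebraMap R C (∑ a, j a * y a b) * g b := by
    simp only [mul_sub, Finset.sum_sub_distrib, map_sum, Finset.sum_mul, Finset.mul_sum, map_mul]
    rw [Finset.sum_comm (γ := Fin k)]
    simp [mul_assoc]
  rw [h4]
  refine Ideal.add_mem _ (Ideal.sum_mem _ fun a _ => Ideal.map_mono hJJ ?_)
    (Ideal.sum_mem _ fun b _ => Ideal.mul_mem_right _ _ (Ideal.mem_map_of_mem _ (h2 b)))
  rw [Ideal.map_mul]
  exact Ideal.mul_mem_mul (Ideal.mem_map_of_mem _ (hj a)) (h3 a)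

end basic

section poly
variable {R B A : Type*} [CommRing R] [CommRing B] [CommRing A] [Algebra R B] [Algebra R A]
  [Algebra B A] [IsScalarTower R B A]

lemma mem_map_poly {σ : Type*} (I : Ideal R) (p : MvPolynomial σ A) :
    p ∈ I.map (algebraMap R (MvPolynomial σ A)) ↔
      ∀ m, p.coeff m ∈ I.map (algebraMap R A) := by
  rw [IsScalarTower.algebraMap_eq R A (MvPolynomial σ A), ← Ideal.map_map]
  exact MvPolynomial.mem_map_C_iff

/-- the subalgebra of elements reached, up to `S`, mod `I` -/
def reach {R C D : Type*} [CommRing R] [CommRing C] [CommRing D] [Algebra R C] [Algebra R D]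
    (S : Submonoid R) (I : Ideal R) (θ : C →ₐ[R] D) : Subalgebra R D where
  carrier := {d | ∃ s ∈ S, ∃ c, algebraMap R D s * d - θ c ∈ I.map (algebraMap R D)}
  mul_mem' := by
    rintro a b ⟨s, hs, c, h⟩ ⟨s', hs', c', h'⟩
    refine ⟨s * s', S.mul_mem hs hs', c * c', ?_⟩
    have : algebraMap R D (s * s') * (a * b) - θ (c * c') =
      (algebraMap R D s * a - θ c) * (algebraMap R D s' * b) +
        θ c * (algebraMap R D s' * b - θ c') := by
      simp only [map_mul]; ring
    rw [this]
    exact Ideal.add_mem _ (Ideal.mul_mem_right _ _ h) (Ideal.mul_mem_left _ _ h')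
  add_mem' := by
    rintro a b ⟨s, hs, c, h⟩ ⟨s', hs', c', h'⟩
    refine ⟨s * s', S.mul_mem hs hs', algebraMap R C s' * c + algebraMap R C s * c', ?_⟩
    have : algebraMap R D (s * s') * (a + b) - θ (algebraMap R C s' * c + algebraMap R C s * c') =
      algebraMap R D s' * (algebraMap R D s * a - θ c) +
        algebraMap R D s * (algebraMap R D s' * b - θ c') := by
      simp only [map_mul, map_add, AlgHom.commutes]; ring
    rw [this]
    exact Ideal.add_mem _ (Ideal.mul_mem_left _ _ h) (Ideal.mul_mem_left _ _ h')
  algebraMap_mem' := fun r => ⟨1, S.one_mem, algebraMap R C r, by simp⟩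

/-- `aeval X` as an `R`-algebra map -/
noncomputable abbrev ev {ι : Type*} (R : Type*) {B A : Type*} [CommRing R] [CommRing B] [CommRing A] [Algebra R B] [Algebra R A]
  [Algebra B A] [IsScalarTower R B A] (X : ι → A) : MvPolynomial ι B →ₐ[R] A :=
  (MvPolynomial.aeval X : MvPolynomial ι B →ₐ[B] A).restrictScalars R

/-- adding variables to a tuple -/
noncomputable abbrev adj {ι σ : Type*} {A : Type*} [CommRing A] (X : ι → A) : ι ⊕ σ → MvPolynomial σ A :=
  Sum.elim (fun i => MvPolynomial.C (X i)) MvPolynomial.X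

lemma adj_coeff {ι σ : Type*} (X : ι → A) (p : MvPolynomial (ι ⊕ σ) B) :
    (MvPolynomial.aeval (adj X) p : MvPolynomial σ A) =
      MvPolynomial.map ((MvPolynomial.aeval X : MvPolynomial ι B →ₐ[B] A) : MvPolynomial ι B →+* A)
        (MvPolynomial.sumAlgEquiv B σ ι (MvPolynomial.rename Sum.swap p)) := by
  induction p using MvPolynomial.induction_on with
  | C b => simp [MvPolynomial.algebraMap_eq, IsScalarTower.algebraMap_apply B A (MvPolynomial σ A)]
  | add p q hp hq => simp only [map_add, hp, hq]
  | mul_X p i hp => rcases i with i | i <;> simp only [map_mul, hp] <;> simp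

lemma adj_LI {ι σ : Type*} {S : Submonoid R} {I : Ideal R} (X : ι → A)
    (h : LI S I (ev R X : MvPolynomial ι B →ₐ[R] A)) :
    LI S I (ev R (adj X) : MvPolynomial (ι ⊕ σ) B →ₐ[R] MvPolynomial σ A) := by
  intro p s hs hp
  simp only [ev, AlgHom.restrictScalars_apply] at hp
  rw [adj_coeff, mem_map_poly] at hp
  set q := (MvPolynomial.sumAlgEquiv B σ ι (MvPolynomial.rename Sum.swap p)) with hq
  have h1 : q ∈ I.map (algebraMap R _) := by
    rw [mem_map_poly]
    intro m
    apply h _ s hs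
    have := hp m
    rw [IsScalarTower.algebraMap_apply R A (MvPolynomial σ A), MvPolynomial.algebraMap_eq,
      MvPolynomial.coeff_C_mul, MvPolynomial.coeff_map] at this
    exact this
  have h2 : p = MvPolynomial.rename Sum.swap ((MvPolynomial.sumAlgEquiv B σ ι).symm q) := by
    rw [hq, AlgEquiv.symm_apply_apply, MvPolynomial.rename_rename]
    simp
  rw [h2]
  exact map_mem_map I ((((MvPolynomial.rename Sum.swap).comp
    (MvPolynomial.sumAlgEquiv B σ ι).symm.toAlgHom)).restrictScalars R) h1

lemma adj_LS {ι σ : Type*} {S : Submonoid R} {I : Ideal R} (X : ι → A)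
    (h : LS S I (ev R X : MvPolynomial ι B →ₐ[R] A)) :
    LS S I (ev R (adj X) : MvPolynomial (ι ⊕ σ) B →ₐ[R] MvPolynomial σ A) := by
  intro d
  change d ∈ reach S I (ev R (adj X) : MvPolynomial (ι ⊕ σ) B →ₐ[R] MvPolynomial σ A)
  induction d using MvPolynomial.induction_on with
  | C a =>
    obtain ⟨s, hs, c, hc⟩ := h a
    refine ⟨s, hs, MvPolynomial.rename Sum.inl c, ?_⟩
    have h1 : (ev R (adj X) : MvPolynomial (ι ⊕ σ) B →ₐ[R] MvPolynomial σ A)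
      (MvPolynomial.rename Sum.inl c) = MvPolynomial.C (ev R X c) := by
      simp only [ev, AlgHom.restrictScalars_apply, MvPolynomial.aeval_rename]
      have : (adj X ∘ Sum.inl : ι → MvPolynomial σ A) = fun i => MvPolynomial.C (X i) := by
        ext; simp
      rw [this]
      exact (MvPolynomial.aeval_algebraMap_apply (MvPolynomial σ A) X c)
    rw [h1, IsScalarTower.algebraMap_apply R A (MvPolynomial σ A), MvPolynomial.algebraMap_eq,
      ← map_mul, ← map_sub]
    have := map_mem_map I (IsScalarTower.toAlgHom R A (MvPolynomial σ A)) hc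
    simpa using this
  | add p q hp hq => exact add_mem hp hq
  | mul_X p i hp =>
    refine mul_mem hp ⟨1, S.one_mem, MvPolynomial.X (Sum.inr i), by simp⟩

end poly
end ResVar
end

section
open TensorProduct

namespace ResVar

lemma ringHom_inj_of_surj {S : Type*} [CommRing S] [IsNoetherianRing S] (f : S →+* S)
    (hf : Function.Surjective f) : Function.Injective f := by
  have hit : ∀ n (x : S), (f ^ n) x = (f^[n]) x := fun n x => by rw [RingHom.coe_pow]
  let K : ℕ →o Ideal S := ⟨fun n => RingHom.ker (f ^ n), monotone_nat_of_le_succ fun n x hx => by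
    rw [RingHom.mem_ker] at hx ⊢
    rw [hit] at hx ⊢
    rw [Function.iterate_succ_apply', hx, map_zero]⟩
  obtain ⟨n, hn⟩ := monotone_stabilizes_iff_noetherian.mpr (inferInstance : IsNoetherian S S) K
  rw [injective_iff_map_eq_zero]
  intro x hx
  obtain ⟨y, rfl⟩ := hf.iterate n x
  have h1 : y ∈ K (n + 1) := by
    change (f ^ (n + 1)) y = 0
    rw [hit, Function.iterate_succ_apply', hx]
  rw [← hn (n + 1) (Nat.le_succ n)] at h1
  have h2 : (f ^ n) y = 0 := h1
  rwa [hit] at h2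

lemma injective_of_LS {B C D : Type*} [CommRing B] [CommRing C] [CommRing D] [Algebra B C]
    [Algebra B D] [IsNoetherianRing C] (t : B) (φ θ : C →ₐ[B] D)
    (h1 : LI (Submonoid.powers t) ⊥ φ) (h2 : LS (Submonoid.powers t) ⊥ φ)
    (h3 : LS (Submonoid.powers t) ⊥ θ) : Function.Injective θ := by
  have hφ : Function.Injective φ := by
    rw [injective_iff_map_eq_zero]
    intro c hc
    simpa using h1 c 1 (one_mem _) (by simp [hc])
  have htC : ∀ k (c : C), algebraMap B C t ^ k * c = 0 → c = 0 := by
    intro k c hc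
    have := h1 c (t ^ k) ⟨k, rfl⟩ (by
      have := congrArg φ hc
      simp only [map_mul, map_pow, AlgHom.commutes, map_zero] at this
      simp [this])
    simpa using this
  let M := Submonoid.powers (algebraMap B C t)
  let N := Submonoid.powers (algebraMap B D t)
  have hle : ∀ ψ : C →ₐ[B] D, M ≤ N.comap (ψ : C →+* D) := by
    rintro ψ _ ⟨k, rfl⟩
    exact ⟨k, by simp⟩
  let F : (C →ₐ[B] D) → (Localization M →+* Localization N) := fun ψ =>
    IsLocalization.map (Localization N) (ψ : C →+* D) (hle ψ)
  have hF : ∀ ψ : C →ₐ[B] D, LS (Submonoid.powers t) ⊥ ψ → Function.Surjective (F ψ) := by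
    intro ψ hψ z
    obtain ⟨d, ⟨_, k, rfl⟩, rfl⟩ := IsLocalization.exists_mk'_eq N z
    obtain ⟨_, ⟨l, rfl⟩, c, hc⟩ := hψ d
    simp only [Ideal.map_bot, Ideal.mem_bot, sub_eq_zero] at hc
    refine ⟨IsLocalization.mk' _ c (⟨algebraMap B C t ^ (l + k), l + k, rfl⟩ : M), ?_⟩
    simp only [F, IsLocalization.map_mk']
    rw [IsLocalization.mk'_eq_iff_eq]
    congr 1
    simp only [RingHom.coe_coe, map_pow, AlgHom.commutes, ← hc]
    ring
  have hFφ : Function.Injective (F φ) := by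
    rw [injective_iff_map_eq_zero]
    intro z hz
    obtain ⟨c, s, rfl⟩ := IsLocalization.exists_mk'_eq M z
    simp only [F, IsLocalization.map_mk', IsLocalization.mk'_eq_zero_iff] at hz
    obtain ⟨⟨_, k, rfl⟩, hk⟩ := hz
    have : c = 0 := by
      apply htC k
      apply hφ
      simpa using hk
    rw [this, IsLocalization.mk'_zero]
  let e := RingEquiv.ofBijective (F φ) ⟨hFφ, hF φ h2⟩
  have hN : IsNoetherianRing (Localization M) := IsLocalization.isNoetherianRing M _ inferInstance
  have hinj := ringHom_inj_of_surj ((e.symm : Localization N →+* Localization M).comp (F θ))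
    (by
      rw [RingHom.coe_comp]
      exact e.symm.surjective.comp (hF θ h3))
  rw [injective_iff_map_eq_zero]
  intro c hc
  have : algebraMap C (Localization M) c = 0 := by
    apply hinj
    simp [F, IsLocalization.map_eq, hc]
  rw [IsLocalization.map_eq_zero_iff M] at this
  obtain ⟨⟨_, k, rfl⟩, hk⟩ := this
  exact htC k c hk

lemma taylor {B D ι : Type*} [CommRing B] [CommRing D] [Algebra B D] [Fintype ι] [DecidableEq ι]
    (y w : ι → D) (l : D) (p : MvPolynomial ι B) :
    ∃ g, MvPolynomial.aeval (fun i => y i + l * w i) p = MvPolynomial.aeval y p +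
      l * ∑ j, MvPolynomial.aeval y (MvPolynomial.pderiv j p) * w j + l ^ 2 * g := by
  induction p using MvPolynomial.induction_on with
  | C b => exact ⟨0, by simp⟩
  | add p q hp hq =>
    obtain ⟨g, hg⟩ := hp
    obtain ⟨g', hg'⟩ := hq
    refine ⟨g + g', ?_⟩
    simp only [map_add, hg, hg', add_mul, Finset.sum_add_distrib]
    ring
  | mul_X p i hp =>
    obtain ⟨g, hg⟩ := hp
    refine ⟨g * (y i + l * w i) + (∑ j, MvPolynomial.aeval y (MvPolynomial.pderiv j p) * w j) * w i, ?_⟩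
    have : ∑ j, MvPolynomial.aeval y (MvPolynomial.pderiv j (p * MvPolynomial.X i)) * w j =
      (∑ j, MvPolynomial.aeval y (MvPolynomial.pderiv j p) * w j) * y i +
        MvPolynomial.aeval y p * w i := by
      have hh : ∀ j, MvPolynomial.aeval y (MvPolynomial.pderiv j (p * MvPolynomial.X i)) * w j =
        (MvPolynomial.aeval y (MvPolynomial.pderiv j p) * w j) * y i +
          if i = j then MvPolynomial.aeval y p * w i else 0 := by
        intro j
        rw [MvPolynomial.pderiv_mul, MvPolynomial.pderiv_X]
        by_cases hij : i = j
        · subst hij; simp; ring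
        · simp [hij, Pi.single_apply, Ne.symm hij]; ring
      rw [Finset.sum_congr rfl fun j _ => hh j, Finset.sum_add_distrib, Finset.sum_mul]
      simp
    rw [this, map_mul, map_mul, hg]
    simp only [MvPolynomial.aeval_X]
    ring

lemma bij_of {B C D : Type*} [CommRing B] [CommRing C] [CommRing D] [Algebra B C]
    [Algebra B D] (t : B) (θ : C →ₐ[B] D) (hinj : Function.Injective θ)
    (htD : ∀ d : D, algebraMap B D t * d = 0 → d = 0)
    (h3 : LS (Submonoid.powers t) ⊥ θ) (h4 : LI ⊥ (Ideal.span {t}) θ) :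
    Function.Bijective θ := by
  refine ⟨hinj, ?_⟩
  have key : ∀ k (d : D), (∃ c, algebraMap B D t ^ k * d = θ c) → ∃ c, θ c = d := by
    intro k
    induction k with
    | zero => rintro d ⟨c, hc⟩; exact ⟨c, by simpa using hc.symm⟩
    | succ k ih =>
      rintro d ⟨c, hc⟩
      have h : c ∈ (Ideal.span {t}).map (algebraMap B C) := by
        apply h4 c 1 (one_mem _)
        rw [map_one, one_mul, ← hc, Ideal.map_span, Set.image_singleton, Ideal.mem_span_singleton]
        exact ⟨algebraMap B D t ^ k * d, by ring⟩
      rw [Ideal.map_span, Set.image_singleton, Ideal.mem_span_singleton] at h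
      obtain ⟨c', rfl⟩ := h
      apply ih d
      refine ⟨c', ?_⟩
      rw [← sub_eq_zero]
      apply htD
      rw [map_mul, AlgHom.commutes] at hc
      rw [mul_sub, ← hc]; ring
  intro d
  obtain ⟨_, ⟨k, rfl⟩, c, hc⟩ := h3 d
  apply key k d ⟨c, ?_⟩
  simpa [sub_eq_zero] using hc

end ResVar
end

section
open TensorProduct

namespace ResVar
open MvPolynomial in
lemma core1 {B A ι : Type*} [CommRing B] [CommRing A] [Algebra B A] [Fintype ι] [DecidableEq ι]
    [IsNoetherianRing B] (t : B) (htA : ∀ a : A, algebraMap B A t * a = 0 → a = 0)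
    (X Y : ι → A)
    (hX1 : LI (Submonoid.powers t) ⊥ (ev B X : MvPolynomial ι B →ₐ[B] A))
    (hX2 : LS (Submonoid.powers t) ⊥ (ev B X : MvPolynomial ι B →ₐ[B] A))
    (hY : LI ⊥ (Ideal.span {t}) (ev B Y : MvPolynomial ι B →ₐ[B] A))
    (h : ι → MvPolynomial ι B) (c a : ℕ) (E0 : ι → A)
    (hX : ∀ i, X i - aeval Y (h i) = algebraMap B A t ^ (2 * c + 2) * E0 i)
    (T T' S S' E E' : Matrix ι ι A)
    (hT : T' * T = (algebraMap B A t ^ a) • (1 : Matrix ι ι A))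
    (hS : S * S' = 1 + algebraMap B A t • E')
    (hH : (Matrix.of fun i j => aeval Y (pderiv j (h i))) * T = (algebraMap B A t ^ c) • S +
      (algebraMap B A t ^ (c + 1)) • E) :
    Nonempty (MvPolynomial ι A ≃ₐ[B] MvPolynomial (ι ⊕ ι) B) := by
  set τ := algebraMap B A t with hτ
  have hτD : algebraMap B (MvPolynomial ι A) t = C τ := by
    rw [IsScalarTower.algebraMap_apply B A (MvPolynomial ι A)]; rfl
  let w : ι → MvPolynomial ι A := fun j => ∑ k, C (T j k) * MvPolynomial.X k
  let l : MvPolynomial ι A := C τ ^ (c + 1)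
  let u : ι → MvPolynomial ι A := fun j => C (Y j) + l * w j
  have hv : ∀ i, ∃ v g : MvPolynomial ι A, C (X i) - aeval u (h i) = C τ ^ (2 * c + 1) * v ∧
      v = -(∑ k, C (S i k) * MvPolynomial.X k) + C τ * g := by
    intro i
    obtain ⟨g, hg⟩ := taylor (fun j => C (Y j)) w l (h i)
    have hC : ∀ p : MvPolynomial ι B, aeval (fun j => (C (Y j) : MvPolynomial ι A)) p = C (aeval Y p) :=
      fun p => aeval_algebraMap_apply (MvPolynomial ι A) Y p
    have hsum : ∑ j, aeval (fun j => (C (Y j) : MvPolynomial ι A)) (pderiv j (h i)) * w j =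
        C τ ^ c * ∑ k, C (S i k) * MvPolynomial.X k +
          C τ ^ (c + 1) * ∑ k, C (E i k) * MvPolynomial.X k := by
      have h1 : ∀ k, ∑ j, aeval Y (pderiv j (h i)) * T j k = τ ^ c * S i k + τ ^ (c + 1) * E i k := by
        intro k
        have := congrFun (congrFun hH i) k
        simpa [Matrix.mul_apply] using this
      simp only [w, hC, Finset.mul_sum]
      rw [Finset.sum_comm, ← Finset.sum_add_distrib]
      refine Finset.sum_congr rfl fun k _ => ?_
      have h2 := congrArg (C : A → MvPolynomial ι A) (h1 k)
      simp only [map_sum, map_mul, map_add, map_pow] at h2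
      simp only [← mul_assoc, ← Finset.sum_mul]
      rw [h2]; ring
    refine ⟨_, C (E0 i) - (∑ k, C (E i k) * MvPolynomial.X k) - g, ?_, rfl⟩
    have h0 := congrArg (C : A → MvPolynomial ι A) (hX i)
    simp only [map_sub, map_mul, map_pow] at h0
    change C (X i) - aeval (fun i => C (Y i) + l * w i) (h i) = _
    rw [hg, hsum, hC, sub_eq_iff_eq_add.mp h0]
    simp only [l]
    ring
  choose v g hv1 hv2 using hv
  let θ : MvPolynomial (ι ⊕ ι) B →ₐ[B] MvPolynomial ι A := ev B (Sum.elim u v)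
  have hθu : ∀ i, θ (MvPolynomial.X (Sum.inl i)) = u i := fun i => by simp [θ, ev]
  have hθv : ∀ i, θ (MvPolynomial.X (Sum.inr i)) = v i := fun i => by simp [θ, ev]
  -- surjectivity after inverting t
  let Q := reach (Submonoid.powers t) ⊥ θ
  have hrange : ∀ p, θ p ∈ Q := fun p => ⟨1, one_mem _, p, by simp⟩
  have hsat : ∀ k d, C τ ^ k * d ∈ Q → d ∈ Q := by
    rintro k d ⟨_, ⟨n, rfl⟩, p, hp⟩
    refine ⟨t ^ (n + k), ⟨n + k, rfl⟩, p, ?_⟩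
    have : algebraMap B (MvPolynomial ι A) (t ^ (n + k)) * d =
      algebraMap B (MvPolynomial ι A) (t ^ n) * (C τ ^ k * d) := by
      simp only [map_pow, hτD]; ring
    rw [this]; exact hp
  have hQu : ∀ i, u i ∈ Q := fun i => hθu i ▸ hrange _
  have hQv : ∀ i, v i ∈ Q := fun i => hθv i ▸ hrange _
  have hQau : ∀ p : MvPolynomial ι B, aeval u p ∈ Q := by
    intro p
    have : aeval u p = θ (rename Sum.inl p) := by
      simp only [θ, ev, AlgHom.restrictScalars_apply, aeval_rename]; rfl
    rw [this]; exact hrange _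
  have hQτ : C τ ∈ Q := hτD ▸ Subalgebra.algebraMap_mem Q t
  have hQX : ∀ i, C (X i) ∈ Q := by
    intro i
    rw [sub_eq_iff_eq_add.mp (hv1 i)]
    exact add_mem (mul_mem (pow_mem hQτ _) (hQv i)) (hQau _)
  have hQA : ∀ x : A, C x ∈ Q := by
    intro x
    obtain ⟨_, ⟨n, rfl⟩, p, hp⟩ := hX2 x
    apply hsat n
    have h1 : τ ^ n * x = aeval X p := by simpa [sub_eq_zero] using hp
    have h2 : C τ ^ n * C x = aeval (fun i => (C (X i) : MvPolynomial ι A)) p := by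
      rw [← map_pow, ← map_mul, h1]
      exact (aeval_algebraMap_apply (MvPolynomial ι A) X p).symm
    rw [h2]
    clear h1 h2 hp
    induction p using MvPolynomial.induction_on with
    | C b => rw [aeval_C]; exact Subalgebra.algebraMap_mem Q b
    | add p q hp hq => rw [map_add]; exact add_mem hp hq
    | mul_X p i hp => rw [map_mul, aeval_X]; exact mul_mem hp (hQX i)
  have hQw : ∀ j, w j ∈ Q := by
    intro j
    apply hsat (c + 1)
    have : C τ ^ (c + 1) * w j = u j - C (Y j) := by simp [u, l]
    rw [this]
    exact sub_mem (hQu j) (hQA _)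
  have hQz : ∀ k, MvPolynomial.X k ∈ Q := by
    intro k
    apply hsat a
    have : C τ ^ a * (MvPolynomial.X k : MvPolynomial ι A) = ∑ j, C (T' k j) * w j := by
      simp only [w, Finset.mul_sum]
      rw [Finset.sum_comm]
      have h1 : ∀ m, ∑ j, T' k j * T j m = if k = m then τ ^ a else 0 := by
        intro m
        have := congrFun (congrFun hT k) m
        simpa [Matrix.mul_apply, Matrix.one_apply] using this
      have h2 : ∀ m, ∑ j, C (T' k j) * (C (T j m) * (MvPolynomial.X m : MvPolynomial ι A)) =
          if k = m then C τ ^ a * MvPolynomial.X m else 0 := by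
        intro m
        simp only [← mul_assoc, ← Finset.sum_mul, ← map_mul, ← map_sum]
        rw [h1 m]; split_ifs <;> simp
      rw [Finset.sum_congr rfl fun m _ => h2 m]
      simp
    rw [this]
    exact sum_mem fun j _ => mul_mem (hQA _) (hQw j)
  have hθS : LS (Submonoid.powers t) ⊥ θ := by
    intro d
    change d ∈ Q
    induction d using MvPolynomial.induction_on with
    | C b => exact hQA b
    | add p q hp hq => exact add_mem hp hq
    | mul_X p i hp => exact mul_mem hp (hQz i)
  have hinj : Function.Injective θ :=
    injective_of_LS t (ev B (adj X)) θ (adj_LI X hX1) (adj_LS X hX2) hθS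
  have htD : ∀ d : MvPolynomial ι A, algebraMap B _ t * d = 0 → d = 0 := by
    intro d hd
    ext m
    apply htA
    have := congrArg (coeff m) hd
    rwa [hτD, coeff_C_mul] at this
  -- injectivity mod t
  have hθI : LI ⊥ (Ideal.span {t}) θ := by
    intro p s hs hp
    apply adj_LI (σ := ι) Y hY p 1 (one_mem _)
    rw [Submonoid.mem_bot] at hs; subst hs
    rw [map_one, one_mul] at hp ⊢
    set I : Ideal (MvPolynomial ι A) := (Ideal.span {t}).map (algebraMap B (MvPolynomial ι A)) with hI
    have hmem : ∀ x, C τ * x ∈ I := fun x => by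
      rw [hI, Ideal.map_span, Set.image_singleton, Ideal.mem_span_singleton, hτD]
      exact ⟨x, rfl⟩
    let ρ : MvPolynomial ι A →ₐ[A] MvPolynomial ι A :=
      aeval (fun k => -∑ j, C (S' k j) * MvPolynomial.X j)
    have hρ := map_mem_map (Ideal.span {t}) (ρ.restrictScalars B) hp
    rw [← hI] at hρ
    -- compare two homs modulo I
    let q := Ideal.Quotient.mkₐ B I
    have hq0 : ∀ x, x ∈ I → q x = 0 := fun x hx => Ideal.Quotient.eq_zero_iff_mem.mpr hx
    have hcomp : (q.comp (ρ.restrictScalars B)).comp θ = q.comp (ev B (adj Y)) := by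
      apply MvPolynomial.algHom_ext
      rintro (i | i)
      · simp only [AlgHom.comp_apply, hθu]
        have : (ρ.restrictScalars B) (u i) = C (Y i) + C τ * (C τ ^ c * ρ (w i)) := by
          simp only [u, l, AlgHom.restrictScalars_apply, map_add, map_mul, map_pow]
          have hc : ∀ x : A, ρ (C x) = C x := fun x => ρ.commutes x
          rw [hc, hc]; ring
        rw [this, map_add, hq0 _ (hmem _)]
        simp
      · simp only [AlgHom.comp_apply, hθv]
        have hc : ∀ x : A, ρ (C x) = C x := fun x => ρ.commutes x
        have h1 : (ρ.restrictScalars B) (v i) = MvPolynomial.X i + C τ *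
          ((∑ j, C (E' i j) * MvPolynomial.X j) + ρ (g i)) := by
          rw [hv2 i]
          simp only [AlgHom.restrictScalars_apply, map_add, map_mul, map_neg, map_sum, hc]
          have h2 : ∀ j, ∑ k, S i k * S' k j = (if i = j then 1 else 0) + τ * E' i j := by
            intro j
            have := congrFun (congrFun hS i) j
            simpa [Matrix.mul_apply, Matrix.one_apply] using this
          have h3 : -∑ k, C (S i k) * ρ (MvPolynomial.X k) =
            MvPolynomial.X i + C τ * ∑ j, C (E' i j) * MvPolynomial.X j := by
            simp only [ρ, aeval_X, mul_neg, Finset.sum_neg_distrib, neg_neg, Finset.mul_sum]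
            rw [Finset.sum_comm]
            have h4 : ∀ j, ∑ k, C (S i k) * (C (S' k j) * (MvPolynomial.X j : MvPolynomial ι A)) =
              (if i = j then MvPolynomial.X j else 0) + C τ * (C (E' i j) * MvPolynomial.X j) := by
              intro j
              simp only [← mul_assoc, ← Finset.sum_mul, ← map_mul, ← map_sum]
              rw [h2 j, map_add, add_mul]; split_ifs <;> simp
            rw [Finset.sum_congr rfl fun j _ => h4 j, Finset.sum_add_distrib]
            simp
          rw [h3]; ring
        rw [h1, map_add, hq0 _ (hmem _)]
        simp
    have h5 := hq0 _ hρ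
    have h6 := DFunLike.congr_fun hcomp p
    simp only [AlgHom.comp_apply] at h6
    rw [h6] at h5
    exact Ideal.Quotient.eq_zero_iff_mem.mp h5
  exact ⟨(AlgEquiv.ofBijective θ (bij_of t θ hinj htD hθS hθI)).symm⟩
end ResVar
end

section
open TensorProduct

open scoped Matrix
namespace ResVar

lemma matrix_aux {A ι : Type*} [CommRing A] [Fintype ι] [DecidableEq ι] (τ : A) (c : ℕ)
    (P P' H J J' E1 E2 E3 : Matrix ι ι A)
    (hP : P * P' = τ ^ c • (1 : Matrix ι ι A))
    (hJ1 : J * J' = 1 + τ ^ (2 * c + 2) • E1) (hJ2 : J' * J = 1 + τ ^ (2 * c + 2) • E2)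
    (hPH : P = H * J + τ ^ (2 * c + 2) • E3) :
    ∃ T T' S S' E E' : Matrix (ι ⊕ ι) (ι ⊕ ι) A,
      T' * T = τ ^ c • (1 : Matrix (ι ⊕ ι) (ι ⊕ ι) A) ∧ S * S' = 1 + τ • E' ∧
      Matrix.fromBlocks H 0 0 1 * T = τ ^ c • S + τ ^ (c + 1) • E := by
  let w : Matrix (ι ⊕ ι) (ι ⊕ ι) A := Matrix.fromBlocks 0 (-1) 1 0
  let w' : Matrix (ι ⊕ ι) (ι ⊕ ι) A := Matrix.fromBlocks 0 1 (-1) 0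
  let a : Matrix (ι ⊕ ι) (ι ⊕ ι) A := Matrix.fromBlocks 1 J 0 1
  let a' : Matrix (ι ⊕ ι) (ι ⊕ ι) A := Matrix.fromBlocks 1 (-J) 0 1
  let b : Matrix (ι ⊕ ι) (ι ⊕ ι) A := Matrix.fromBlocks 1 0 (-J') 1
  let b' : Matrix (ι ⊕ ι) (ι ⊕ ι) A := Matrix.fromBlocks 1 0 J' 1
  have hw : w' * w = 1 := by
    simp [w, w', Matrix.fromBlocks_multiply, ← Matrix.fromBlocks_one]
  have ha : a' * a = 1 := by
    simp [a, a', Matrix.fromBlocks_multiply, ← Matrix.fromBlocks_one]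
  have hb : b' * b = 1 := by
    simp [b, b', Matrix.fromBlocks_multiply, ← Matrix.fromBlocks_one]
  let L := a * b * a * w
  let L' := w' * a' * b' * a'
  have hL : L' * L = 1 := by
    calc L' * L = w' * (a' * (b' * (a' * a) * b) * a) * w := by simp only [L, L', mul_assoc]
      _ = 1 := by rw [ha, mul_one, hb, mul_one, ha, mul_one, hw]
  have hLf : L = Matrix.fromBlocks J 0 0 J' + τ ^ (2 * c + 2) •
      Matrix.fromBlocks (-E1 * J) E1 (-E2) 0 := by
    have : L = Matrix.fromBlocks ((1 - J * J') * J + J) (-(1 - J * J')) (1 - J' * J) J' := by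
      simp only [L, a, b, w, Matrix.fromBlocks_multiply]
      congr 1 <;> simp <;> noncomm_ring
    rw [this, hJ1, hJ2, Matrix.fromBlocks_smul, Matrix.fromBlocks_add]
    congr 1
    · simp [add_comm]
    · simp
    · simp
    · simp
  refine ⟨L * Matrix.fromBlocks P' 0 0 (τ ^ c • 1), Matrix.fromBlocks P 0 0 1 * L',
    Matrix.fromBlocks 1 0 0 J', Matrix.fromBlocks 1 0 0 J,
    τ ^ (c + 1) • (Matrix.fromBlocks (- (E3 * P')) 0 0 0 +
      Matrix.fromBlocks H 0 0 1 * Matrix.fromBlocks (-E1 * J) E1 (-E2) 0 *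
        Matrix.fromBlocks P' 0 0 (τ ^ c • 1)),
    τ ^ (2 * c + 1) • Matrix.fromBlocks 0 0 0 E2, ?_, ?_, ?_⟩
  · calc _ = Matrix.fromBlocks P 0 0 1 * (L' * L) * Matrix.fromBlocks P' 0 0 (τ ^ c • 1) := by
          simp only [mul_assoc]
      _ = _ := by
        rw [hL, mul_one, Matrix.fromBlocks_multiply, ← Matrix.fromBlocks_one,
          Matrix.fromBlocks_smul]
        simp [hP]
  · rw [Matrix.fromBlocks_multiply, hJ2, ← Matrix.fromBlocks_one, smul_smul, ← pow_succ',
      Matrix.fromBlocks_smul, Matrix.fromBlocks_add]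
    simp
  · rw [hLf, smul_smul, ← pow_add, add_mul, mul_add, smul_add, ← add_assoc]
    have e : c + 1 + (c + 1) = 2 * c + 2 := by ring
    rw [e]
    congr 1
    · simp only [Matrix.fromBlocks_multiply, Matrix.fromBlocks_smul, Matrix.fromBlocks_add]
      have : H * J * P' = τ ^ c • 1 - τ ^ (2 * c + 2) • (E3 * P') := by
        rw [← hP, hPH, add_mul, Matrix.smul_mul]; simp
      simp [← mul_assoc, this, sub_eq_add_neg]
    · simp only [Matrix.smul_mul, Matrix.mul_smul, mul_assoc]

lemma chain_rule {B A ι : Type*} [CommRing B] [CommRing A] [Algebra B A] [Fintype ι]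
    [DecidableEq ι] (D : Derivation B A A) (Y : ι → A) (p : MvPolynomial ι B) :
    D (MvPolynomial.aeval Y p) =
      ∑ j, MvPolynomial.aeval Y (MvPolynomial.pderiv j p) * D (Y j) := by
  induction p using MvPolynomial.induction_on with
  | C b => simp
  | add p q hp hq => simp only [map_add, hp, hq, add_mul, Finset.sum_add_distrib]
  | mul_X p i hp =>
    have hh : ∀ j, MvPolynomial.aeval Y (MvPolynomial.pderiv j (p * MvPolynomial.X i)) * D (Y j) =
        Y i * (MvPolynomial.aeval Y (MvPolynomial.pderiv j p) * D (Y j)) +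
          if i = j then MvPolynomial.aeval Y p * D (Y i) else 0 := by
      intro j
      rw [MvPolynomial.pderiv_mul, MvPolynomial.pderiv_X]
      by_cases hij : i = j
      · subst hij; simp; ring
      · simp [hij]; ring
    rw [Finset.sum_congr rfl fun j _ => hh j, Finset.sum_add_distrib, ← Finset.mul_sum, ← hp]
    simp [Derivation.leibniz]; ring

/-- the family `δ` of derivations has unimodular values -/
def Spans {B A ι : Type*} [CommRing B] [CommRing A] [Algebra B A]
    (δ : ι → Derivation B A A) : Prop :=
  Submodule.span A (Set.range fun a => fun i => δ i a) = ⊤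

lemma exists_right {B A ι : Type*} [CommRing B] [CommRing A] [Algebra B A] [Fintype ι]
    [DecidableEq ι] (t : B) (X : ι → A)
    (hX2 : LS (Submonoid.powers t) ⊥ (ev B X : MvPolynomial ι B →ₐ[B] A))
    (δ : ι → Derivation B A A) (hδ : Spans δ) :
    ∃ (c : ℕ) (P' : Matrix ι ι A), P' * (Matrix.of fun i j => δ j (X i)) =
      algebraMap B A t ^ c • (1 : Matrix ι ι A) := by
  set τ := algebraMap B A t
  let P : Matrix ι ι A := Matrix.of fun i j => δ j (X i)
  have key : ∀ v : ι → A, ∃ (k : ℕ) (r : ι → A), τ ^ k • v = r ᵥ* P := by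
    intro v
    have hv : v ∈ Submodule.span A (Set.range fun a => fun i => δ i a) := hδ ▸ trivial
    induction hv using Submodule.span_induction with
    | mem v hv =>
      obtain ⟨a, rfl⟩ := hv
      obtain ⟨_, ⟨n, rfl⟩, p, hp⟩ := hX2 a
      have h1 : τ ^ n * a = MvPolynomial.aeval X p := by simpa [sub_eq_zero, τ] using hp
      refine ⟨n, fun j => MvPolynomial.aeval X (MvPolynomial.pderiv j p), ?_⟩
      ext i
      have h2 := chain_rule (δ i) X p
      rw [← h1] at h2
      have h3 : δ i (τ ^ n * a) = τ ^ n * δ i a := by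
        have : τ ^ n * a = (t ^ n) • a := by rw [Algebra.smul_def, map_pow]
        rw [this, Derivation.map_smul, Algebra.smul_def, map_pow]
      rw [h3] at h2
      simp only [Pi.smul_apply, smul_eq_mul, h2, Matrix.vecMul, dotProduct, P, Matrix.of_apply]
    | zero => exact ⟨0, 0, by simp⟩
    | add v w _ _ hv hw =>
      obtain ⟨k, r, h⟩ := hv
      obtain ⟨k', r', h'⟩ := hw
      refine ⟨k + k', τ ^ k' • r + τ ^ k • r', ?_⟩
      rw [Matrix.add_vecMul, Matrix.smul_vecMul, Matrix.smul_vecMul, ← h, ← h', smul_smul,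
        smul_smul, smul_add, pow_add, mul_comm]
    | smul a v _ hv =>
      obtain ⟨k, r, h⟩ := hv
      exact ⟨k, a • r, by rw [Matrix.smul_vecMul, ← h, smul_comm]⟩
  choose k r hr using fun i : ι => key (Pi.single i 1)
  refine ⟨∑ i, k i, Matrix.of fun i j => τ ^ (∑ l ∈ Finset.univ.erase i, k l) * r i j, ?_⟩
  ext i j
  have h1 := congrFun (hr i) j
  simp only [Matrix.vecMul, dotProduct, Pi.smul_apply, smul_eq_mul] at h1
  simp only [Matrix.mul_apply, Matrix.of_apply, mul_assoc, ← Finset.mul_sum]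
  have h2 : ∑ x, r i x * δ j (X x) = ∑ x, r i x * P x j := rfl
  rw [h2, ← h1, ← mul_assoc, ← pow_add, Finset.sum_erase_add _ _ (Finset.mem_univ i)]
  simp [Matrix.one_apply, Pi.single_apply, eq_comm]

lemma exists_left {B A ι : Type*} [CommRing B] [CommRing A] [Algebra B A] [Fintype ι]
    [DecidableEq ι] (t : B) (Y : ι → A)
    (hY2 : LS ⊥ (Ideal.span {t}) (ev B Y : MvPolynomial ι B →ₐ[B] A))
    (δ : ι → Derivation B A A) (hδ : Spans δ) :
    ∃ (C E : Matrix ι ι A), C * (Matrix.of fun i j => δ j (Y i)) =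
      1 + algebraMap B A t • E := by
  set τ := algebraMap B A t
  let P : Matrix ι ι A := Matrix.of fun i j => δ j (Y i)
  have key : ∀ v : ι → A, ∃ (r e : ι → A), r ᵥ* P = v + τ • e := by
    intro v
    have hv : v ∈ Submodule.span A (Set.range fun a => fun i => δ i a) := hδ ▸ trivial
    induction hv using Submodule.span_induction with
    | mem v hv =>
      obtain ⟨a, rfl⟩ := hv
      obtain ⟨s, hs, p, hp⟩ := hY2 a
      rw [Submonoid.mem_bot] at hs; subst hs
      rw [Ideal.map_span, Set.image_singleton, Ideal.mem_span_singleton] at hp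
      obtain ⟨x, hx⟩ := hp
      have h1 : MvPolynomial.aeval Y p = a - t • x := by
        rw [Algebra.smul_def, ← hx]; simp
      refine ⟨fun j => MvPolynomial.aeval Y (MvPolynomial.pderiv j p), fun i => - δ i x, ?_⟩
      ext i
      have h2 := chain_rule (δ i) Y p
      rw [h1, map_sub, Derivation.map_smul, Algebra.smul_def] at h2
      simp only [Matrix.vecMul, dotProduct, P, Matrix.of_apply, ← h2, Pi.add_apply, Pi.smul_apply,
        smul_eq_mul]
      ring
    | zero => exact ⟨0, 0, by simp⟩
    | add v w _ _ hv hw =>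
      obtain ⟨r, e, h⟩ := hv
      obtain ⟨r', e', h'⟩ := hw
      refine ⟨r + r', e + e', ?_⟩
      rw [Matrix.add_vecMul, h, h', smul_add]; abel
    | smul a v _ hv =>
      obtain ⟨r, e, h⟩ := hv
      exact ⟨a • r, a • e, by rw [Matrix.smul_vecMul, h, smul_add, smul_comm]⟩
  choose r e hr using fun i : ι => key (Pi.single i 1)
  refine ⟨Matrix.of r, Matrix.of e, ?_⟩
  ext i j
  have h1 := congrFun (hr i) j
  simp only [Matrix.vecMul, dotProduct, Pi.add_apply, Pi.smul_apply, smul_eq_mul] at h1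
  have h2 : ∑ x, r i x * δ j (Y x) = ∑ x, r i x * P x j := rfl
  simp only [Matrix.mul_apply, Matrix.of_apply, h2, h1]
  simp [Matrix.one_apply, Pi.single_apply, eq_comm]

end ResVar
end

section
open TensorProduct
open scoped Matrix
namespace ResVar

lemma nz_pow {A : Type*} [CommRing A] {τ : A} (hτ : ∀ a : A, τ * a = 0 → a = 0) (k : ℕ) :
    ∀ a : A, τ ^ k * a = 0 → a = 0 := by
  induction k with
  | zero => intro a h; simpa using h
  | succ k ih => intro a h; exact hτ _ (ih _ (by rw [← h]; ring))

lemma mat_comm {A ι : Type*} [CommRing A] [Fintype ι] [DecidableEq ι] {τ : A}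
    (hτ : ∀ a : A, τ * a = 0 → a = 0) (c : ℕ) (P P' : Matrix ι ι A)
    (h : P' * P = τ ^ c • (1 : Matrix ι ι A)) : P * P' = τ ^ c • (1 : Matrix ι ι A) := by
  have h1 : (P * P' - τ ^ c • 1) * P = 0 := by
    rw [sub_mul, mul_assoc, h]; simp
  have h2 : P.det • (P * P' - τ ^ c • 1) = 0 := by
    have := congrArg (· * P.adjugate) h1
    simpa [mul_assoc, Matrix.mul_adjugate] using this
  have h3 : P'.det * P.det = (τ ^ c) ^ Fintype.card ι := by
    rw [← Matrix.det_mul, h, Matrix.det_smul]; simp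
  rw [← sub_eq_zero]
  ext i j
  have h4 := congrFun (congrFun h2 i) j
  simp only [Matrix.smul_apply, smul_eq_mul, Matrix.zero_apply] at h4
  apply nz_pow hτ (c * Fintype.card ι)
  rw [pow_mul, ← h3, mul_assoc, h4, mul_zero]

lemma inv_lift {A ι : Type*} [CommRing A] [Fintype ι] [DecidableEq ι] (τ : A)
    (C J E : Matrix ι ι A) (h : C * J = 1 + τ • E) (K : ℕ) :
    ∃ J' E1 E2 : Matrix ι ι A, J * J' = 1 + τ ^ K • E1 ∧ J' * J = 1 + τ ^ K • E2 := by
  have h1 : ∀ K, ∃ J' E2 : Matrix ι ι A, J' * J = 1 + τ ^ (K + 1) • E2 := by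
    intro K
    induction K with
    | zero => exact ⟨C, E, by simpa using h⟩
    | succ K ih =>
      obtain ⟨J', E2, h2⟩ := ih
      refine ⟨(1 - τ ^ (K + 1) • E2) * J', - (τ ^ K • (E2 * E2)), ?_⟩
      have e1 : τ ^ (K + 1 + 1) * τ ^ K = τ ^ (K + 1) * τ ^ (K + 1) := by ring
      rw [mul_assoc, h2, smul_neg, smul_smul, e1]
      simp only [sub_mul, mul_add, Matrix.smul_mul, Matrix.mul_smul, smul_add, smul_smul,
        mul_one, one_mul]
      abel
  obtain ⟨J', E2, h2⟩ := h1 K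
  have h3 : J' * J = 1 + τ ^ K • (τ • E2) := by rw [h2, smul_smul, pow_succ]
  let q := Ideal.Quotient.mk (Ideal.span {τ ^ K})
  have hq0 : q (τ ^ K) = 0 := Ideal.Quotient.eq_zero_iff_mem.mpr (Ideal.mem_span_singleton_self _)
  have h4 : q.mapMatrix J' * q.mapMatrix J = 1 := by
    rw [← map_mul, h3]
    ext i j
    simp [Matrix.one_apply, hq0]
  have h5 : q.mapMatrix J * q.mapMatrix J' = 1 := mul_eq_one_comm.mp h4
  have h6 : ∀ i j, ∃ e, (J * J') i j = (1 : Matrix ι ι A) i j + τ ^ K * e := by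
    intro i j
    rw [← map_mul] at h5
    have h7 : q ((J * J') i j) = q ((1 : Matrix ι ι A) i j) := by
      have := congrFun (congrFun h5 i) j
      rw [← map_one q.mapMatrix] at this
      exact this
    rw [Ideal.Quotient.eq, Ideal.mem_span_singleton] at h7
    obtain ⟨e, he⟩ := h7
    exact ⟨e, by rw [← he]; ring⟩
  choose E1 hE1 using h6
  refine ⟨J', Matrix.of E1, τ • E2, ?_, h3⟩
  ext i j
  simpa using hE1 i j

lemma LS_pow {B A ι : Type*} [CommRing B] [CommRing A] [Algebra B A] (t : B) (Y : ι → A)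
    (hY2 : LS ⊥ (Ideal.span {t}) (ev B Y : MvPolynomial ι B →ₐ[B] A)) (K : ℕ) :
    ∀ a, ∃ (p : MvPolynomial ι B) (e : A), a - MvPolynomial.aeval Y p = algebraMap B A t ^ K * e := by
  induction K with
  | zero => intro a; exact ⟨0, a, by simp⟩
  | succ K ih =>
    intro a
    obtain ⟨p, e, h⟩ := ih a
    obtain ⟨s, hs, p', hp⟩ := hY2 e
    rw [Submonoid.mem_bot] at hs; subst hs
    rw [Ideal.map_span, Set.image_singleton, Ideal.mem_span_singleton] at hp
    obtain ⟨x, hx⟩ := hp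
    refine ⟨p + MvPolynomial.C (t ^ K) * p', x, ?_⟩
    simp only [map_one, one_mul, ev, AlgHom.restrictScalars_apply] at hx
    rw [map_add, map_mul, MvPolynomial.aeval_C, map_pow, ← sub_sub, h, ← mul_sub, hx]
    ring

open MvPolynomial in
lemma core2 {B A ι : Type*} [CommRing B] [CommRing A] [Algebra B A] [Fintype ι] [DecidableEq ι]
    [IsNoetherianRing B] (t : B) (htA : ∀ a : A, algebraMap B A t * a = 0 → a = 0)
    (X Y : ι → A)
    (hX1 : LI (Submonoid.powers t) ⊥ (ev B X : MvPolynomial ι B →ₐ[B] A))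
    (hX2 : LS (Submonoid.powers t) ⊥ (ev B X : MvPolynomial ι B →ₐ[B] A))
    (hY1 : LI ⊥ (Ideal.span {t}) (ev B Y : MvPolynomial ι B →ₐ[B] A))
    (hY2 : LS ⊥ (Ideal.span {t}) (ev B Y : MvPolynomial ι B →ₐ[B] A))
    (δ : ι → Derivation B A A) (hδ : Spans δ) :
    Nonempty (MvPolynomial (ι ⊕ ι) (MvPolynomial ι A) ≃ₐ[B]
      MvPolynomial ((ι ⊕ ι) ⊕ (ι ⊕ ι)) B) := by
  obtain ⟨c, P', hP'⟩ := exists_right t X hX2 δ hδ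
  obtain ⟨C0, E0, hC0⟩ := exists_left t Y hY2 δ hδ
  have hτD : algebraMap B (MvPolynomial ι A) t = C (algebraMap B A t) := by
    rw [IsScalarTower.algebraMap_apply B A (MvPolynomial ι A)]; rfl
  set τ := algebraMap B A t with hτ
  set P : Matrix ι ι A := Matrix.of fun i j => δ j (X i) with hPdef
  set J : Matrix ι ι A := Matrix.of fun i j => δ j (Y i) with hJdef
  have hP := mat_comm htA c P P' hP'
  obtain ⟨J', E1, E2, hJ1, hJ2⟩ := inv_lift τ C0 J E0 hC0 (2 * c + 2)
  choose h e he using fun i => LS_pow t Y hY2 (2 * c + 2) (X i)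
  let H : Matrix ι ι A := Matrix.of fun i j => aeval Y (pderiv j (h i))
  have hPH : P = H * J + τ ^ (2 * c + 2) • (Matrix.of fun i j => δ j (e i)) := by
    ext i j
    have h1 : X i = aeval Y (h i) + (t ^ (2 * c + 2)) • e i := by
      rw [Algebra.smul_def, map_pow, ← he i]; ring
    have h2 : δ j (X i) = ∑ k, aeval Y (pderiv k (h i)) * δ j (Y k) +
        τ ^ (2 * c + 2) * δ j (e i) := by
      conv_lhs => rw [h1]
      rw [map_add, chain_rule, Derivation.map_smul, Algebra.smul_def, map_pow]
    simpa [Matrix.mul_apply, P, H, J] using h2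
  obtain ⟨T, T', S, S', E, E', hT, hS, hH⟩ := matrix_aux τ c P P' H J J' E1 E2 _ hP hJ1 hJ2 hPH
  let φ : Matrix (ι ⊕ ι) (ι ⊕ ι) A →+* Matrix (ι ⊕ ι) (ι ⊕ ι) (MvPolynomial ι A) :=
    (C : A →+* MvPolynomial ι A).mapMatrix
  have hφs : ∀ (a : A) M, φ (a • M) = (C a : MvPolynomial ι A) • φ M := by
    intro a M
    ext1 i j
    simp [φ]
  let h' : ι ⊕ ι → MvPolynomial (ι ⊕ ι) B :=
    Sum.elim (fun i => rename Sum.inl (h i)) (fun i => MvPolynomial.X (Sum.inr i))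
  have hren : ∀ p : MvPolynomial ι B, aeval (adj Y : ι ⊕ ι → MvPolynomial ι A) (rename Sum.inl p) =
      C (aeval Y p) := by
    intro p
    rw [aeval_rename]
    exact aeval_algebraMap_apply (MvPolynomial ι A) Y p
  have hH' : (Matrix.of fun i j => aeval (adj Y : ι ⊕ ι → MvPolynomial ι A) (pderiv j (h' i))) =
      φ (Matrix.fromBlocks H 0 0 1) := by
    ext1 i j
    rcases i with i | i <;> rcases j with j | j
    · simp only [Matrix.of_apply, h', Sum.elim_inl, φ, RingHom.mapMatrix_apply, Matrix.map_apply,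
        Matrix.fromBlocks_apply₁₁]
      rw [pderiv_rename Sum.inl_injective, hren]
      rfl
    · simp only [Matrix.of_apply, h', Sum.elim_inl, φ, RingHom.mapMatrix_apply, Matrix.map_apply,
        Matrix.fromBlocks_apply₁₂]
      rw [pderiv_eq_zero_of_notMem_vars]
      · simp
      · intro hm
        have := vars_rename _ _ hm
        simp at this
    · simp [h', φ, Pi.single_apply]
    · simp only [Matrix.of_apply, h', Sum.elim_inr, φ, RingHom.mapMatrix_apply, Matrix.map_apply,
        Matrix.fromBlocks_apply₂₂, pderiv_X, Matrix.one_apply, Pi.single_apply, Sum.inr.injEq]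
      simp only [eq_comm]
      split_ifs <;> simp
  refine core1 (A := MvPolynomial ι A) t ?_ (adj X) (adj Y) (adj_LI X hX1) (adj_LS X hX2)
    (adj_LI Y hY1) h' c c (Sum.elim (fun i => C (e i)) 0) ?_ (φ T) (φ T') (φ S) (φ S') (φ E) (φ E')
    ?_ ?_ ?_
  · intro d hd
    ext m
    apply htA
    have := congrArg (coeff m) hd
    rwa [hτD, coeff_C_mul] at this
  · rintro (i | i)
    · rw [hτD, ← map_pow]
      simp only [h', Sum.elim_inl, hren, ← map_sub, he]
      rw [map_mul]
    · simp [h']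
  · rw [hτD, ← map_mul, hT, hφs, map_one, map_pow]
  · rw [hτD, ← map_mul, hS, map_add, map_one, hφs]
  · rw [hH', hτD, ← map_mul, hH, map_add, hφs, hφs, map_pow, map_pow]
end ResVar
end

section
open TensorProduct
open scoped Matrix
namespace ResVar

/-- coefficientwise application of a derivation -/
noncomputable def coefFun {B A : Type*} [CommRing B] [CommRing A] [Algebra B A] {σ : Type*}
    (D : Derivation B A A) (p : MvPolynomial σ A) : MvPolynomial σ A :=
  ∑ m ∈ p.support, MvPolynomial.monomial m (D (MvPolynomial.coeff m p))

lemma coeff_coefFun {B A : Type*} [CommRing B] [CommRing A] [Algebra B A] {σ : Type*}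
    (D : Derivation B A A) (p : MvPolynomial σ A) (m : σ →₀ ℕ) :
    MvPolynomial.coeff m (coefFun D p) = D (MvPolynomial.coeff m p) := by
  classical
  rw [coefFun, MvPolynomial.coeff_sum]
  simp only [MvPolynomial.coeff_monomial]
  rw [Finset.sum_ite_eq']
  split_ifs with h
  · rfl
  · rw [MvPolynomial.notMem_support_iff.mp h, map_zero]

/-- coefficientwise extension of a derivation -/
noncomputable def coefD {B A : Type*} [CommRing B] [CommRing A] [Algebra B A] (σ : Type*)
    (D : Derivation B A A) : Derivation B (MvPolynomial σ A) (MvPolynomial σ A) :=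
  Derivation.mk'
    { toFun := coefFun D
      map_add' := fun p q => by
        ext m; simp only [MvPolynomial.coeff_add, coeff_coefFun, map_add]
      map_smul' := fun b p => by
        ext m
        simp only [MvPolynomial.coeff_smul, coeff_coefFun, Derivation.map_smul, RingHom.id_apply] }
    (by
      classical
      intro p q
      ext m
      simp only [LinearMap.coe_mk, AddHom.coe_mk, smul_eq_mul, MvPolynomial.coeff_add,
        MvPolynomial.coeff_mul, coeff_coefFun, map_sum, Derivation.leibniz, Finset.sum_add_distrib]
      congr 1
      refine Finset.sum_nbij' Prod.swap Prod.swap ?_ ?_ ?_ ?_ ?_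
      · intro x hx; simpa [add_comm] using hx
      · intro x hx; simpa [add_comm] using hx
      · simp
      · simp
      · simp)

lemma coefD_C {B A : Type*} [CommRing B] [CommRing A] [Algebra B A] {σ : Type*}
    (D : Derivation B A A) (a : A) : coefD σ D (MvPolynomial.C a) = MvPolynomial.C (D a) := by
  classical
  ext m
  change MvPolynomial.coeff m (coefFun D _) = _
  rw [coeff_coefFun, MvPolynomial.coeff_C, MvPolynomial.coeff_C]
  split_ifs <;> simp

lemma coefD_X {B A : Type*} [CommRing B] [CommRing A] [Algebra B A] {σ : Type*}
    (D : Derivation B A A) (i : σ) : coefD σ D (MvPolynomial.X i) = 0 := by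
  classical
  ext m
  change MvPolynomial.coeff m (coefFun D _) = _
  rw [coeff_coefFun, MvPolynomial.coeff_X]
  split_ifs <;> simp

lemma exists_spans {B A τ σ : Type*} [CommRing B] [CommRing A] [Algebra B A] [Finite τ] [Finite σ]
    (Δ : τ → Derivation B A A) (w : σ → τ → A)
    (h : Submodule.span A (Set.range (fun a => fun j => Δ j a) ∪ Set.range w) = ⊤) :
    ∃ δ : τ → Derivation B (MvPolynomial σ A) (MvPolynomial σ A), Spans δ := by
  classical
  cases nonempty_fintype τ
  cases nonempty_fintype σ
  let δ : τ → Derivation B (MvPolynomial σ A) (MvPolynomial σ A) := fun j =>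
    coefD σ (Δ j) + ∑ k, (MvPolynomial.C (w k j) : MvPolynomial σ A) •
      (MvPolynomial.pderiv (R := A) k).restrictScalars B
  have hsum : ∀ j x, δ j x = coefD σ (Δ j) x + ∑ k, MvPolynomial.C (w k j) *
      MvPolynomial.pderiv k x := by
    intro j x
    simp only [δ, Derivation.add_apply]
    congr 1
    have : ∀ (s : Finset σ), (∑ k ∈ s, (MvPolynomial.C (w k j) : MvPolynomial σ A) •
      (MvPolynomial.pderiv (R := A) k).restrictScalars B : Derivation B (MvPolynomial σ A) (MvPolynomial σ A)) x = ∑ k ∈ s, MvPolynomial.C (w k j) *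
      MvPolynomial.pderiv k x := by
      intro s
      induction s using Finset.induction_on with
      | empty => simp
      | insert a s ha ih =>
        rw [Finset.sum_insert ha, Finset.sum_insert ha, Derivation.add_apply, ih]
        simp
    exact this _
  refine ⟨δ, ?_⟩
  unfold Spans
  set N := Submodule.span (MvPolynomial σ A) (Set.range fun a => fun i => δ i a)
  let f : (τ → A) →ₗ[A] (τ → MvPolynomial σ A) :=
    { toFun := fun v j => MvPolynomial.C (v j)
      map_add' := fun v v' => by ext1 j; simp
      map_smul' := fun a v => by ext1 j; simp [MvPolynomial.smul_eq_C_mul] }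
  have h1 : (⊤ : Submodule A (τ → A)) ≤ (N.restrictScalars A).comap f := by
    rw [← h, Submodule.span_le]
    rintro _ (⟨a, rfl⟩ | ⟨k, rfl⟩)
    · refine Submodule.subset_span ⟨MvPolynomial.C a, ?_⟩
      ext1 j
      simp [hsum, coefD_C, f]
    · refine Submodule.subset_span ⟨MvPolynomial.X k, ?_⟩
      ext1 j
      simp [hsum, coefD_X, f, MvPolynomial.pderiv_X, Pi.single_apply]
  rw [eq_top_iff]
  intro v _
  rw [pi_eq_sum_univ v]
  refine Submodule.sum_mem _ fun i _ => Submodule.smul_mem _ _ ?_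
  have h2 : f (fun j => if i = j then 1 else 0) ∈ N := h1 trivial
  convert h2 using 1
  ext1 j
  simp only [f, LinearMap.coe_mk, AddHom.coe_mk]
  split_ifs <;> simp

lemma spans_stab {B A τ σ : Type*} [CommRing B] [CommRing A] [Algebra B A] [Finite τ] [Finite σ]
    (Δ : τ → Derivation B A A) (hΔ : Spans Δ) :
    ∃ δ : τ ⊕ σ → Derivation B (MvPolynomial σ A) (MvPolynomial σ A), Spans δ := by
  classical
  cases nonempty_fintype τ
  cases nonempty_fintype σ
  refine exists_spans (Sum.elim Δ 0) (fun k => Pi.single (Sum.inr k) 1) ?_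
  set N := Submodule.span A (Set.range (fun a => fun j => (Sum.elim Δ 0 : τ ⊕ σ → Derivation B A A) j a) ∪
    Set.range (fun k : σ => (Pi.single (Sum.inr k) 1 : τ ⊕ σ → A)))
  let f : (τ → A) →ₗ[A] (τ ⊕ σ → A) :=
    { toFun := fun v => Sum.elim v 0
      map_add' := fun v v' => by ext1 (j | j) <;> simp
      map_smul' := fun a v => by ext1 (j | j) <;> simp }
  have h1 : (⊤ : Submodule A (τ → A)) ≤ N.comap f := by
    unfold Spans at hΔ
    rw [← hΔ, Submodule.span_le]
    rintro _ ⟨a, rfl⟩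
    refine Submodule.subset_span (Or.inl ⟨a, ?_⟩)
    ext1 (j | j) <;> simp [f]
  rw [eq_top_iff]
  intro v _
  have : v = f (fun j => v (Sum.inl j)) + ∑ k, v (Sum.inr k) • Pi.single (Sum.inr k) 1 := by
    ext1 (j | j) <;> simp [f, Pi.single_apply]
  rw [this]
  exact Submodule.add_mem _ (h1 trivial) (Submodule.sum_mem _ fun k _ => Submodule.smul_mem _ _
    (Submodule.subset_span (Or.inr ⟨k, rfl⟩)))

end ResVar
end

section
open TensorProduct
open scoped Matrix
namespace ResVar

/-- elements regular modulo `I` -/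
def regMod {R : Type*} [CommRing R] (I : Ideal R) : Submonoid R where
  carrier := {t | ∀ x, t * x ∈ I → x ∈ I}
  mul_mem' := fun {a b} ha hb x hx => hb _ (ha _ (by rwa [← mul_assoc]))
  one_mem' := fun x hx => by simpa using hx

lemma LS_fin {R C D : Type*} [CommRing R] [CommRing C] [CommRing D] [Algebra R C] [Algebra R D]
    [Algebra.FiniteType R D] {S : Submonoid R} {I : Ideal R} (θ : C →ₐ[R] D) (h : LS S I θ) :
    ∃ t ∈ S, LS (Submonoid.powers t) I θ := by
  classical
  obtain ⟨G, hG⟩ := Algebra.FiniteType.out (R := R) (A := D)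
  choose s hs c hc using h
  refine ⟨∏ g ∈ G, s g, Submonoid.prod_mem _ fun g _ => hs g, ?_⟩
  have : Algebra.adjoin R (G : Set D) ≤ reach (Submonoid.powers (∏ g ∈ G, s g)) I θ := by
    rw [Algebra.adjoin_le_iff]
    intro g hg
    refine ⟨_, Submonoid.mem_powers _, algebraMap R C (∏ g ∈ G.erase g, s g) * c g, ?_⟩
    rw [← Finset.prod_erase_mul _ _ hg, map_mul, map_mul, AlgHom.commutes, mul_assoc, ← mul_sub]
    exact Ideal.mul_mem_left _ _ (hc g)
  rw [hG] at this
  exact fun d => this trivial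

section
variable {R B A : Type*} [CommRing R] [CommRing B] [CommRing A] [Algebra R B] [Algebra R A]
  [Algebra B A] [IsScalarTower R B A]

lemma aeval_congr_mod {ι : Type*} (I : Ideal R) (X Y : ι → A)
    (h : ∀ i, X i - Y i ∈ I.map (algebraMap R A)) (c : MvPolynomial ι B) :
    MvPolynomial.aeval X c - MvPolynomial.aeval Y c ∈ I.map (algebraMap R A) := by
  induction c using MvPolynomial.induction_on with
  | C b => simp
  | add p q hp hq =>
    rw [map_add, map_add, add_sub_add_comm]; exact Ideal.add_mem _ hp hq
  | mul_X p i hp =>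
    rw [map_mul, map_mul, MvPolynomial.aeval_X, MvPolynomial.aeval_X]
    have : MvPolynomial.aeval X p * X i - MvPolynomial.aeval Y p * Y i =
      (MvPolynomial.aeval X p - MvPolynomial.aeval Y p) * X i +
        MvPolynomial.aeval Y p * (X i - Y i) := by ring
    rw [this]
    exact Ideal.add_mem _ (Ideal.mul_mem_right _ _ hp) (Ideal.mul_mem_left _ _ (h i))

/-- scaling of variables -/
lemma LI_scale {ι : Type*} [Module.Flat R B] (P : Ideal R) [P.IsPrime] (X Y : ι → A) (e : R)
    (he : e ∉ P) (hXY : ∀ i, X i - algebraMap R A e * Y i ∈ P.map (algebraMap R A))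
    (h : LI P.primeCompl P (ev R Y : MvPolynomial ι B →ₐ[R] A)) :
    LI P.primeCompl P (ev R X : MvPolynomial ι B →ₐ[R] A) := by
  intro c s hs hc
  let sc : MvPolynomial ι B →ₐ[B] MvPolynomial ι B :=
    MvPolynomial.aeval fun i => MvPolynomial.C (algebraMap R B e) * MvPolynomial.X i
  have h1 : MvPolynomial.aeval (fun i => algebraMap R A e * Y i) c =
      MvPolynomial.aeval Y (sc c) := by
    simp only [sc]
    rw [← AlgHom.comp_apply]
    congr 1
    ext i
    simp [← IsScalarTower.algebraMap_apply]
  have h2 : sc c ∈ P.map (algebraMap R _) := by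
    apply h _ s hs
    have h3 := Ideal.mul_mem_left _ (algebraMap R A s) (aeval_congr_mod P X _ hXY c)
    have h4 := Ideal.sub_mem _ hc h3
    rw [mul_sub] at h4
    simp only [AlgHom.restrictScalars_apply, sub_sub_cancel] at h4
    rw [h1] at h4
    exact h4
  rw [mem_map_poly] at h2 ⊢
  intro m
  have h3 : ∀ c : MvPolynomial ι B, (sc c).coeff m = algebraMap R B (e ^ m.degree) * c.coeff m := by
    classical
    intro c
    induction c using MvPolynomial.induction_on' with
    | add p q hp hq => rw [map_add, MvPolynomial.coeff_add, MvPolynomial.coeff_add, hp, hq, mul_add]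
    | monomial u a =>
      have : sc (MvPolynomial.monomial u a) =
          MvPolynomial.C (algebraMap R B (e ^ u.degree)) * MvPolynomial.monomial u a := by
        simp only [sc, MvPolynomial.aeval_monomial, mul_pow, Finsupp.prod_mul]
        rw [MvPolynomial.monomial_eq, MvPolynomial.algebraMap_eq, mul_left_comm, ← mul_assoc,
          ← mul_assoc]
        congr 2
        simp only [Finsupp.prod, Finsupp.degree, map_pow, Finset.prod_pow_eq_pow_sum]
        rfl
      rw [this, MvPolynomial.coeff_C_mul]
      rw [MvPolynomial.coeff_monomial]
      split_ifs with hum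
      · rw [hum]
      · simp
  refine nz_of_flat (s := e ^ m.degree) ?_ (by rw [← h3]; exact h2 m)
  intro x hx
  refine (Ideal.IsPrime.mem_or_mem ‹_› hx).resolve_left fun hh => he (Ideal.IsPrime.mem_of_pow_mem ‹_› _ hh)

lemma LS_scale {ι : Type*} (P : Ideal R) [P.IsPrime] (X Y : ι → A) (e : R)
    (he : e ∉ P) (hXY : ∀ i, X i - algebraMap R A e * Y i ∈ P.map (algebraMap R A))
    (h : LS P.primeCompl P (ev R Y : MvPolynomial ι B →ₐ[R] A)) :
    LS P.primeCompl P (ev R X : MvPolynomial ι B →ₐ[R] A) := by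
  have h1 : ∀ c : MvPolynomial ι B, MvPolynomial.aeval Y c ∈
      reach P.primeCompl P (ev R X : MvPolynomial ι B →ₐ[R] A) := by
    intro c
    induction c using MvPolynomial.induction_on with
    | C b => exact ⟨1, one_mem _, MvPolynomial.C b, by simp⟩
    | add p q hp hq => rw [map_add]; exact add_mem hp hq
    | mul_X p i hp =>
      rw [map_mul, MvPolynomial.aeval_X]
      refine mul_mem hp ⟨e, he, MvPolynomial.X i, ?_⟩
      rw [← Ideal.neg_mem_iff]
      simpa using hXY i
  intro d
  obtain ⟨s, hs, c, hc⟩ := h d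
  obtain ⟨s', hs', c', hc'⟩ := h1 c
  refine ⟨s' * s, mul_mem hs' hs, c', ?_⟩
  have := Ideal.add_mem _ (Ideal.mul_mem_left _ (algebraMap R A s') hc) hc'
  rw [mul_sub] at this
  simpa [mul_assoc] using this

lemma generic [IsNoetherianRing R] [Module.Flat R B] [Module.Flat R A] [Algebra.FiniteType R A]
    {ι : Type*} (I : Ideal R) (hI : I.IsRadical)
    (F : ∀ (P : Ideal R) [P.IsPrime], ∃ X : ι → A,
      LI P.primeCompl P (ev R X : MvPolynomial ι B →ₐ[R] A) ∧
      LS P.primeCompl P (ev R X : MvPolynomial ι B →ₐ[R] A)) :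
    ∃ (X : ι → A) (t : R), t ∈ regMod I ∧
      LI (Submonoid.powers t) I (ev R X : MvPolynomial ι B →ₐ[R] A) ∧
      LS (Submonoid.powers t) I (ev R X : MvPolynomial ι B →ₐ[R] A) := by
  classical
  have hfin := Ideal.finite_minimalPrimes_of_isNoetherianRing R I
  let Ps := hfin.toFinset
  have hPs : ∀ {p}, p ∈ Ps ↔ p ∈ I.minimalPrimes := fun {p} => by simp [Ps]
  have hprime : ∀ p : Ps, (p : Ideal R).IsPrime := fun p => (hPs.mp p.2).1.1
  have hIP : ∀ x, (∀ p : Ps, x ∈ (p : Ideal R)) → x ∈ I := by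
    intro x hx
    rw [← hI.radical, ← Ideal.sInf_minimalPrimes, Submodule.mem_sInf]
    exact fun p hp => hx ⟨p, hPs.mpr hp⟩
  have hIle : ∀ p : Ps, I ≤ (p : Ideal R) := fun p => (hPs.mp p.2).1.2
  have he : ∀ p : Ps, ∃ e : R, e ∉ (p : Ideal R) ∧ ∀ q : Ps, q ≠ p → e ∈ (q : Ideal R) := by
    intro p
    by_contra! hcon
    have h1 : (Finset.univ.erase p).inf (fun q : Ps => (q : Ideal R)) ≤ (p : Ideal R) := by
      intro x hx
      by_contra hxp
      obtain ⟨q, hq, hq'⟩ := hcon x hxp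
      exact hq' ((Finset.inf_le (f := fun q : Ps => (q : Ideal R)) (Finset.mem_erase.mpr ⟨hq, Finset.mem_univ _⟩)) hx)
    obtain ⟨q, hq, hqp⟩ := ((hprime p).inf_le').mp h1
    apply (Finset.mem_erase.mp hq).1
    apply Subtype.ext
    exact le_antisymm hqp ((hPs.mp p.2).2 (hPs.mp q.2).1 hqp)
  choose e he1 he2 using he
  choose X hX1 hX2 using fun p : Ps => @F p (hprime p)
  have heI : ∀ (p : Ps) x, x ∈ (p : Ideal R) → e p * x ∈ I := by
    intro p x hx
    apply hIP
    intro q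
    by_cases hq : q = p
    · subst hq; exact Ideal.mul_mem_left _ _ hx
    · exact Ideal.mul_mem_right _ _ (he2 p q hq)
  have heI' : ∀ {C : Type _} [CommRing C] [Algebra R C] (p : Ps) (c : C),
      c ∈ (p : Ideal R).map (algebraMap R C) → algebraMap R C (e p) * c ∈ I.map (algebraMap R C) := by
    intro C _ _ p c hc
    obtain ⟨n, i, d, hi, rfl⟩ := exists_sum_of_mem_map hc
    rw [Finset.mul_sum]
    refine Ideal.sum_mem _ fun k _ => ?_
    rw [← mul_assoc, ← map_mul]
    exact Ideal.mul_mem_right _ _ (Ideal.mem_map_of_mem _ (heI p _ (hi k)))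
  have heI2 : ∀ {C : Type _} [CommRing C] [Algebra R C] (p : Ps) (c : C),
      c ∈ (p : Ideal R).map (algebraMap R C) → algebraMap R C (e p) * c ∈ I.map (algebraMap R C) := by
    intro C _ _ p c hc
    obtain ⟨n, i, d, hi, rfl⟩ := exists_sum_of_mem_map hc
    rw [Finset.mul_sum]
    refine Ideal.sum_mem _ fun k _ => ?_
    rw [← mul_assoc, ← map_mul]
    exact Ideal.mul_mem_right _ _ (Ideal.mem_map_of_mem _ (heI p _ (hi k)))
  let Z : ι → A := fun i => ∑ p : Ps, algebraMap R A (e p) * X p i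
  have hZ : ∀ (p : Ps) i, Z i - algebraMap R A (e p) * X p i ∈ (p : Ideal R).map (algebraMap R A) := by
    intro p i
    simp only [Z]
    rw [← Finset.sum_erase_add _ _ (Finset.mem_univ p), add_sub_cancel_right]
    refine Ideal.sum_mem _ fun q hq => Ideal.mul_mem_right _ _ (Ideal.mem_map_of_mem _ ?_)
    exact he2 q p (Ne.symm (Finset.mem_erase.mp hq).1)
  have hreg : ∀ t, (∀ p : Ps, t ∉ (p : Ideal R)) → t ∈ regMod I := by
    intro t ht x hx
    apply hIP
    intro p
    exact ((hprime p).mem_or_mem (hIle p hx)).resolve_left (ht p)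
  have hE : (∑ p : Ps, e p) ∈ regMod I := by
    apply hreg
    intro p hp
    rw [← Finset.sum_erase_add _ _ (Finset.mem_univ p)] at hp
    refine he1 p ((Ideal.add_mem_iff_right _ ?_).mp hp)
    refine Ideal.sum_mem _ fun q hq => ?_
    exact he2 q p (Ne.symm (Finset.mem_erase.mp hq).1)
  have hLI : LI (regMod I) I (ev R Z : MvPolynomial ι B →ₐ[R] A) := by
    intro c s hs hc
    have hc' := nz_of_flat hs hc
    have h1 : ∀ p : Ps, c ∈ (p : Ideal R).map (algebraMap R (MvPolynomial ι B)) := by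
      intro p
      have := hprime p
      refine LI_scale (p : Ideal R) Z (X p) (e p) (he1 p) (hZ p) (hX1 p) c 1 (one_mem _) ?_
      rw [map_one, one_mul]
      exact Ideal.map_mono (hIle p) hc'
    rw [mem_map_poly]
    intro m
    refine nz_of_flat hE ?_
    rw [map_sum, Finset.sum_mul]
    refine Ideal.sum_mem _ fun p _ => heI' p _ ?_
    exact (mem_map_poly _ _).mp (h1 p) m
  have hLS : LS (regMod I) I (ev R Z : MvPolynomial ι B →ₐ[R] A) := by
    intro a
    let T : Ideal R :=
      { carrier := {t | ∃ c, algebraMap R A t * a - (ev R Z : MvPolynomial ι B →ₐ[R] A) c ∈ I.map (algebraMap R A)}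
        add_mem' := by
          rintro s t ⟨c, hc⟩ ⟨d, hd⟩
          refine ⟨c + d, ?_⟩
          rw [map_add, map_add, add_mul, add_sub_add_comm]
          exact Ideal.add_mem _ hc hd
        zero_mem' := ⟨0, by simp⟩
        smul_mem' := by
          rintro r t ⟨c, hc⟩
          refine ⟨algebraMap R _ r * c, ?_⟩
          rw [smul_eq_mul, map_mul, map_mul, AlgHom.commutes, mul_assoc, ← mul_sub]
          exact Ideal.mul_mem_left _ _ hc }
    have hT : ∀ p : Ps, ¬ T ≤ (p : Ideal R) := by
      intro p hle
      have := hprime p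
      obtain ⟨s, hs, c, hc⟩ := LS_scale (p : Ideal R) Z (X p) (e p) (he1 p) (hZ p) (hX2 p) a
      have : e p * s ∈ T := by
        refine ⟨algebraMap R _ (e p) * c, ?_⟩
        rw [map_mul, map_mul, AlgHom.commutes, mul_assoc, ← mul_sub]
        exact heI2 p _ hc
      exact ((hprime p).mem_or_mem (hle this)).elim (he1 p) hs
    have hav : ¬ ((T : Set R) ⊆ ⋃ p ∈ (Ps : Set (Ideal R)), (p : Set R)) := by
      rw [Ideal.subset_union_prime (f := fun p : Ideal R => p) (s := Ps) ⊤ ⊤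
        (fun p hp _ _ => hprime ⟨p, hp⟩)]
      rintro ⟨p, hp, hle⟩
      exact hT ⟨p, hp⟩ hle
    rw [Set.not_subset] at hav
    obtain ⟨t, ⟨c, hc⟩, ht⟩ := hav
    refine ⟨t, hreg t ?_, c, hc⟩
    intro p hp
    apply ht
    simp only [Set.mem_iUnion]
    exact ⟨p, p.2, hp⟩
  obtain ⟨t, ht, hLS'⟩ := LS_fin _ hLS
  refine ⟨Z, t, ht, ?_, hLS'⟩
  intro c s hs
  exact hLI c s (Submonoid.powers_le.mpr ht hs)
end
end ResVar
end

section
open TensorProduct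
open scoped Matrix
namespace ResVar

lemma descend_der {B A B' A' : Type*} [CommRing B] [CommRing A] [CommRing B'] [CommRing A']
    [Algebra B A] [Algebra B' A'] (πB : B →+* B') (πA : A →+* A')
    (hB : Function.Surjective πB) (hA : Function.Surjective πA)
    (hπ : ∀ b, πA (algebraMap B A b) = algebraMap B' A' (πB b))
    (D : Derivation B A A) (hD : ∀ a, πA a = 0 → πA (D a) = 0) :
    ∃ D' : Derivation B' A' A', ∀ a, D' (πA a) = πA (D a) := by
  have key : ∀ a, πA (D (Function.surjInv hA (πA a))) = πA (D a) := by
    intro a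
    rw [← sub_eq_zero, ← map_sub, ← map_sub]
    apply hD
    rw [map_sub, Function.surjInv_eq hA, sub_self]
  refine ⟨Derivation.mk'
    { toFun := fun x => πA (D (Function.surjInv hA x))
      map_add' := ?_
      map_smul' := ?_ } ?_, ?_⟩
  · intro x y
    obtain ⟨a, rfl⟩ := hA x
    obtain ⟨b, rfl⟩ := hA y
    rw [← map_add, key, key, key, ← map_add, ← map_add]
  · intro c x
    obtain ⟨a, rfl⟩ := hA x
    obtain ⟨b, rfl⟩ := hB c
    rw [Algebra.smul_def, ← hπ, ← map_mul, key, ← Algebra.smul_def, Derivation.map_smul, key,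
      RingHom.id_apply, Algebra.smul_def, Algebra.smul_def, map_mul, hπ]
  · intro x y
    obtain ⟨a, rfl⟩ := hA x
    obtain ⟨b, rfl⟩ := hA y
    simp only [LinearMap.coe_mk, AddHom.coe_mk]
    rw [← map_mul, key, key, key, Derivation.leibniz]
    simp
  · intro a
    exact key a

section
variable {R B A B' A' : Type*} [CommRing R] [CommRing B] [CommRing A] [Algebra R B] [Algebra R A]
  [Algebra B A] [IsScalarTower R B A] [CommRing B'] [CommRing A'] [Algebra B' A']
  (I : Ideal R) (πB : B →+* B') (πA : A →+* A')

/-- `B' → A'` is `B/IB → A/IA` -/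
structure IsRed : Prop where
  sB : Function.Surjective πB
  sA : Function.Surjective πA
  comm : ∀ b, πA (algebraMap B A b) = algebraMap B' A' (πB b)
  kB : ∀ b, πB b = 0 ↔ b ∈ I.map (algebraMap R B)
  kA : ∀ a, πA a = 0 ↔ a ∈ I.map (algebraMap R A)

variable {I πB πA}

lemma IsRed.aeval {ι : Type*} (h : IsRed I πB πA) (X : ι → A) (p : MvPolynomial ι B) :
    πA (MvPolynomial.aeval X p) = MvPolynomial.aeval (fun i => πA (X i)) (MvPolynomial.map πB p) := by
  induction p using MvPolynomial.induction_on with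
  | C b => simp [h.comm]
  | add p q hp hq => simp only [map_add, hp, hq]
  | mul_X p i hp => simp only [map_mul, hp]; simp

lemma IsRed.map_eq_zero {ι : Type*} (h : IsRed I πB πA) (p : MvPolynomial ι B) :
    MvPolynomial.map πB p = 0 ↔ p ∈ I.map (algebraMap R (MvPolynomial ι B)) := by
  rw [mem_map_poly, MvPolynomial.ext_iff]
  simp only [MvPolynomial.coeff_map, MvPolynomial.coeff_zero, h.kB]

lemma IsRed.poly (h : IsRed I πB πA) (σ : Type*) :
    IsRed I πB (MvPolynomial.map πA : MvPolynomial σ A →+* MvPolynomial σ A') where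
  sB := h.sB
  sA := MvPolynomial.map_surjective _ h.sA
  comm := fun b => by
    rw [IsScalarTower.algebraMap_apply B A (MvPolynomial σ A),
      IsScalarTower.algebraMap_apply B' A' (MvPolynomial σ A'), MvPolynomial.algebraMap_eq,
      MvPolynomial.algebraMap_eq, MvPolynomial.map_C, h.comm]
  kB := h.kB
  kA := fun p => by
    rw [mem_map_poly, MvPolynomial.ext_iff]
    simp only [MvPolynomial.coeff_map, MvPolynomial.coeff_zero, h.kA]

lemma IsRed.transfer {κ : Type*} (h : IsRed I πB πA) (e : A' ≃ₐ[B'] MvPolynomial κ B') :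
    ∃ Z : κ → A, LI ⊥ I (ev R Z : MvPolynomial κ B →ₐ[R] A) ∧
      LS ⊥ I (ev R Z : MvPolynomial κ B →ₐ[R] A) := by
  choose Z hZ using fun i => h.sA (e.symm (MvPolynomial.X i))
  have key : ∀ p, πA (MvPolynomial.aeval Z p) = e.symm (MvPolynomial.map πB p) := by
    intro p
    rw [h.aeval]
    simp only [hZ]
    have : MvPolynomial.aeval (fun i => e.symm (MvPolynomial.X i)) = e.symm.toAlgHom := by
      ext i; simp
    rw [this]; rfl
  refine ⟨Z, ?_, ?_⟩
  · intro p s hs hp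
    rw [Submonoid.mem_bot] at hs; subst hs
    rw [map_one, one_mul, ← h.kA] at hp
    rw [← h.map_eq_zero]
    exact e.symm.injective (by rw [← key, map_zero]; exact hp)
  · intro d
    obtain ⟨p, hp⟩ := MvPolynomial.map_surjective πB h.sB (e (πA d))
    refine ⟨1, rfl, p, ?_⟩
    rw [← h.kA, map_one, one_mul, map_sub, sub_eq_zero]
    simp only [AlgHom.restrictScalars_apply]
    rw [key, hp, AlgEquiv.symm_apply_apply]

lemma mem_sup_span {C : Type*} [CommRing C] [Algebra R C] {t : R} {c : C}
    (h : c ∈ (I ⊔ Ideal.span {t}).map (algebraMap R C)) :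
    ∃ c1 ∈ I.map (algebraMap R C), ∃ x, c = c1 + algebraMap R C t * x := by
  rw [Ideal.map_sup, Ideal.map_span, Set.image_singleton, Submodule.mem_sup] at h
  obtain ⟨c1, h1, c2, h2, rfl⟩ := h
  obtain ⟨x, rfl⟩ := Ideal.mem_span_singleton.mp h2
  exact ⟨c1, h1, x, rfl⟩

lemma IsRed.core [Module.Flat R A] [IsNoetherianRing B] {ι : Type*} [Fintype ι] [DecidableEq ι]
    (h : IsRed I πB πA) (t : R) (ht : t ∈ regMod I) (X Y : ι → A)
    (hX1 : LI (Submonoid.powers t) I (ev R X : MvPolynomial ι B →ₐ[R] A))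
    (hX2 : LS (Submonoid.powers t) I (ev R X : MvPolynomial ι B →ₐ[R] A))
    (hY1 : LI ⊥ (I ⊔ Ideal.span {t}) (ev R Y : MvPolynomial ι B →ₐ[R] A))
    (hY2 : LS ⊥ (I ⊔ Ideal.span {t}) (ev R Y : MvPolynomial ι B →ₐ[R] A))
    (δ : ι → Derivation B A A) (hδ : Spans δ) :
    Nonempty (MvPolynomial (ι ⊕ ι) (MvPolynomial ι A') ≃ₐ[B']
      MvPolynomial ((ι ⊕ ι) ⊕ (ι ⊕ ι)) B') := by
  have : IsNoetherianRing B' := isNoetherianRing_of_surjective B B' πB h.sB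
  have hI : ∀ (D : Derivation B A A) a, πA a = 0 → πA (D a) = 0 := by
    intro D a ha
    rw [h.kA] at ha ⊢
    obtain ⟨n, i, d, hi, rfl⟩ := exists_sum_of_mem_map ha
    rw [map_sum]
    refine Ideal.sum_mem _ fun k _ => ?_
    rw [IsScalarTower.algebraMap_apply R B A, ← Algebra.smul_def, Derivation.map_smul,
      Algebra.smul_def, ← IsScalarTower.algebraMap_apply R B A]
    exact Ideal.mul_mem_right _ _ (Ideal.mem_map_of_mem _ (hi k))
  choose δ' hδ' using fun i => descend_der πB πA h.sB h.sA h.comm (δ i) (hI (δ i))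
  have hcm : ∀ r, algebraMap B' A' (πB (algebraMap R B r)) = πA (algebraMap R A r) := by
    intro r
    rw [← h.comm, ← IsScalarTower.algebraMap_apply]
  refine core2 (πB (algebraMap R B t)) ?_ (fun i => πA (X i)) (fun i => πA (Y i)) ?_ ?_ ?_ ?_ δ' ?_
  · intro a'
    obtain ⟨a, rfl⟩ := h.sA a'
    rw [hcm, ← map_mul, h.kA, h.kA]
    exact nz_of_flat ht
  · rintro c' _ ⟨n, rfl⟩ hc
    obtain ⟨c, rfl⟩ := MvPolynomial.map_surjective πB h.sB c'
    simp only [AlgHom.restrictScalars_apply, Ideal.map_bot, Ideal.mem_bot] at hc ⊢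
    rw [h.map_eq_zero]
    refine hX1 c (t ^ n) ⟨n, rfl⟩ ?_
    rw [map_pow, hcm, ← h.aeval, ← map_pow, ← map_mul, h.kA, ← map_pow] at hc
    exact hc
  · intro d'
    obtain ⟨d, rfl⟩ := h.sA d'
    obtain ⟨_, ⟨n, rfl⟩, c, hc⟩ := hX2 d
    refine ⟨_, ⟨n, rfl⟩, MvPolynomial.map πB c, ?_⟩
    simp only [AlgHom.restrictScalars_apply, Ideal.map_bot, Ideal.mem_bot]
    rw [map_pow, hcm, ← h.aeval, ← map_pow, ← map_mul, ← map_sub, h.kA, ← map_pow]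
    exact hc
  · intro c' s hs hc
    rw [Submonoid.mem_bot] at hs; subst hs
    obtain ⟨c, rfl⟩ := MvPolynomial.map_surjective πB h.sB c'
    rw [map_one, one_mul, Ideal.map_span, Set.image_singleton, Ideal.mem_span_singleton] at hc
    simp only [AlgHom.restrictScalars_apply] at hc
    obtain ⟨x', hx⟩ := hc
    obtain ⟨x, rfl⟩ := h.sA x'
    rw [hcm, ← h.aeval, ← map_mul, ← sub_eq_zero, ← map_sub, h.kA] at hx
    have h1 : c ∈ (I ⊔ Ideal.span {t}).map (algebraMap R (MvPolynomial ι B)) := by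
      refine hY1 c 1 rfl ?_
      rw [map_one, one_mul]
      have h2 := Ideal.add_mem _ (Ideal.map_mono (le_sup_left : I ≤ I ⊔ Ideal.span {t}) hx)
        (Ideal.mul_mem_right x _ (Ideal.mem_map_of_mem (algebraMap R A)
          (Ideal.mem_sup_right (Ideal.mem_span_singleton_self t) : t ∈ I ⊔ Ideal.span {t})))
      rw [sub_add_cancel] at h2
      exact h2
    obtain ⟨c1, hc1, x1, rfl⟩ := mem_sup_span h1
    rw [map_add, (h.map_eq_zero c1).mpr hc1, zero_add, map_mul]
    refine Ideal.mul_mem_right _ _ ?_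
    rw [IsScalarTower.algebraMap_apply R B (MvPolynomial ι B), MvPolynomial.algebraMap_eq,
      MvPolynomial.algebraMap_eq, MvPolynomial.map_C]
    exact Ideal.mem_map_of_mem _ (Ideal.mem_span_singleton_self _)
  · intro d'
    obtain ⟨d, rfl⟩ := h.sA d'
    obtain ⟨s, hs, c, hc⟩ := hY2 d
    rw [Submonoid.mem_bot] at hs; subst hs
    refine ⟨1, rfl, MvPolynomial.map πB c, ?_⟩
    obtain ⟨c1, hc1, x1, hx⟩ := mem_sup_span hc
    simp only [AlgHom.restrictScalars_apply, map_one, one_mul] at hx ⊢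
    rw [← h.aeval, ← map_sub, hx, map_add, (h.kA c1).mpr hc1, zero_add, map_mul, ← hcm]
    exact Ideal.mul_mem_right _ _ (Ideal.mem_map_of_mem _ (Ideal.mem_span_singleton_self _))
  · unfold Spans at hδ ⊢
    rw [eq_top_iff]
    rintro v' -
    choose v hv using fun i => h.sA (v' i)
    have hvm : v ∈ Submodule.span A (Set.range fun a => fun i => δ i a) := hδ ▸ trivial
    have hv' : v' = fun i => πA (v i) := by ext i; rw [hv]
    rw [hv']
    clear hv' hv
    induction hvm using Submodule.span_induction with
    | mem v hv =>
      obtain ⟨a, rfl⟩ := hv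
      refine Submodule.subset_span ⟨πA a, ?_⟩
      ext i; simp [hδ']
    | zero => simp only [Pi.zero_apply, map_zero]; exact Submodule.zero_mem _
    | add v w _ _ hv hw =>
      have := Submodule.add_mem _ hv hw
      convert this using 1
      ext i; simp
    | smul a v _ hv =>
      have := Submodule.smul_mem _ (πA a) hv
      convert this using 1
      ext i; simp
end

/-- the statement for Noetherian induction -/
def QQ (ι R B A : Type*) [CommRing R] [CommRing B] [CommRing A] [Algebra R B] [Algebra R A]
  [Algebra B A] [IsScalarTower R B A] (I : Ideal R) : Prop :=
  ∃ (ℓ : ℕ) (Y : ι ⊕ Fin ℓ → MvPolynomial (Fin ℓ) A),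
    LI ⊥ I (ev R Y : MvPolynomial (ι ⊕ Fin ℓ) B →ₐ[R] MvPolynomial (Fin ℓ) A) ∧
    LS ⊥ I (ev R Y : MvPolynomial (ι ⊕ Fin ℓ) B →ₐ[R] MvPolynomial (Fin ℓ) A)

lemma LI_equiv {R B A D ι κ : Type*} [CommRing R] [CommRing B] [CommRing A] [CommRing D]
    [Algebra R B] [Algebra R A] [Algebra R D] [Algebra B A] [Algebra B D]
    [IsScalarTower R B A] [IsScalarTower R B D] (f : A ≃ₐ[B] D) (g : κ ≃ ι) {I : Ideal R} (Z : ι → A)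
    (h : LI ⊥ I (ev R Z : MvPolynomial ι B →ₐ[R] A) ∧ LS ⊥ I (ev R Z : MvPolynomial ι B →ₐ[R] A)) :
    LI ⊥ I (ev R (fun i => f (Z (g i))) : MvPolynomial κ B →ₐ[R] D) ∧
    LS ⊥ I (ev R (fun i => f (Z (g i))) : MvPolynomial κ B →ₐ[R] D) := by
  have key : ∀ p : MvPolynomial κ B, MvPolynomial.aeval (fun i => f (Z (g i))) p =
      f (MvPolynomial.aeval Z (MvPolynomial.rename g p)) := by
    intro p
    rw [MvPolynomial.aeval_rename]
    exact (MvPolynomial.comp_aeval_apply (fun i => Z (g i)) f.toAlgHom p).symm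
  have hf : ∀ x, x ∈ I.map (algebraMap R A) ↔ f x ∈ I.map (algebraMap R D) := by
    intro x
    refine ⟨fun hx => map_mem_map I (f.toAlgHom.restrictScalars R) hx, fun hx => ?_⟩
    have := map_mem_map I (f.symm.toAlgHom.restrictScalars R) hx
    simpa using this
  obtain ⟨h1, h2⟩ := h
  constructor
  · intro p s hs hp
    rw [Submonoid.mem_bot] at hs; subst hs
    rw [map_one, one_mul, AlgHom.restrictScalars_apply, key, ← hf] at hp
    have := h1 _ 1 rfl (by rw [map_one, one_mul]; exact hp)
    have h3 := map_mem_map I ((MvPolynomial.rename g.symm :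
      MvPolynomial ι B →ₐ[B] MvPolynomial κ B).restrictScalars R) this
    simpa [MvPolynomial.rename_rename] using h3
  · intro d
    obtain ⟨s, hs, c, hc⟩ := h2 (f.symm d)
    rw [Submonoid.mem_bot] at hs; subst hs
    refine ⟨1, rfl, MvPolynomial.rename g.symm c, ?_⟩
    rw [AlgHom.restrictScalars_apply, key, MvPolynomial.rename_rename]
    rw [hf] at hc
    simpa using hc

lemma step {R B A ι : Type*} [CommRing R] [CommRing B] [CommRing A] [Algebra R B] [Algebra R A]
    [Algebra B A] [IsScalarTower R B A] [Module.Flat R A] [IsNoetherianRing B] [Fintype ι]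
    [DecidableEq ι] (I : Ideal R) (t : R) (ht : t ∈ regMod I) (X : ι → A)
    (hX1 : LI (Submonoid.powers t) I (ev R X : MvPolynomial ι B →ₐ[R] A))
    (hX2 : LS (Submonoid.powers t) I (ev R X : MvPolynomial ι B →ₐ[R] A))
    (δ : ι → Derivation B A A) (hδ : Spans δ)
    (hQ : QQ ι R B A (I ⊔ Ideal.span {t})) : QQ ι R B A I := by
  classical
  obtain ⟨ℓ, Y, hY1, hY2⟩ := hQ
  let _ : Algebra (B ⧸ I.map (algebraMap R B)) (A ⧸ I.map (algebraMap R A)) :=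
    (Ideal.quotientMap (I.map (algebraMap R A)) (algebraMap B A) (by
      rw [← Ideal.map_le_iff_le_comap, Ideal.map_map, ← IsScalarTower.algebraMap_eq])).toAlgebra
  have hred : IsRed I (Ideal.Quotient.mk (I.map (algebraMap R B)))
      (Ideal.Quotient.mk (I.map (algebraMap R A))) :=
    { sB := Ideal.Quotient.mk_surjective
      sA := Ideal.Quotient.mk_surjective
      comm := fun b => rfl
      kB := fun b => Ideal.Quotient.eq_zero_iff_mem
      kA := fun b => Ideal.Quotient.eq_zero_iff_mem }
  have : Module.Flat R (MvPolynomial (Fin ℓ) A) := Module.Flat.trans R A _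
  have hred1 := hred.poly (Fin ℓ)
  obtain ⟨δ', hδ'⟩ := spans_stab (σ := Fin ℓ) δ hδ
  obtain ⟨e⟩ := hred1.core t ht (adj X) Y (adj_LI X hX1) (adj_LS X hX2) hY1 hY2 δ' hδ'
  have hred2 := (hred1.poly (ι ⊕ Fin ℓ)).poly ((ι ⊕ Fin ℓ) ⊕ (ι ⊕ Fin ℓ))
  obtain ⟨Z, hZ⟩ := hred2.transfer e
  let κ := ι ⊕ Fin ℓ
  let L := Fintype.card ((((κ ⊕ κ) ⊕ κ)) ⊕ Fin ℓ)
  let f1 : MvPolynomial (κ ⊕ κ) (MvPolynomial κ (MvPolynomial (Fin ℓ) A)) ≃ₐ[B]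
    MvPolynomial (Fin L) A :=
    (((MvPolynomial.sumAlgEquiv (MvPolynomial (Fin ℓ) A) (κ ⊕ κ) κ).symm.restrictScalars B).trans
      ((MvPolynomial.sumAlgEquiv A ((κ ⊕ κ) ⊕ κ) (Fin ℓ)).symm.restrictScalars B)).trans
      ((MvPolynomial.renameEquiv A (Fintype.equivFin _)).restrictScalars B)
  have g : ι ⊕ Fin L ≃ (κ ⊕ κ) ⊕ (κ ⊕ κ) := by
    apply Fintype.equivOfCardEq
    simp [κ, L]
    ring
  exact ⟨L, _, LI_equiv f1 g Z hZ⟩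

end ResVar
end

section
open TensorProduct
open scoped Matrix
namespace ResVar

lemma main_ind {R B A ι : Type*} [CommRing R] [CommRing B] [CommRing A] [Algebra R B] [Algebra R A]
    [Algebra B A] [IsScalarTower R B A] [IsNoetherianRing R] [Module.Flat R B]
    [Module.Flat R A] [Algebra.FiniteType R A] [IsNoetherianRing B] [Fintype ι]
    [DecidableEq ι] (δ : ι → Derivation B A A) (hδ : Spans δ)
    (F : ∀ (P : Ideal R) [P.IsPrime], ∃ X : ι → A,
      LI P.primeCompl P (ev R X : MvPolynomial ι B →ₐ[R] A) ∧
      LS P.primeCompl P (ev R X : MvPolynomial ι B →ₐ[R] A)) (I : Ideal R) :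
    QQ ι R B A I := by
  refine IsNoetherian.induction (R := R) (M := R) (P := fun I : Ideal R => QQ ι R B A I) ?_ I
  intro (I : Ideal R) ih
  by_cases hI : I = ⊤
  · subst hI
    refine ⟨0, 0, ?_, ?_⟩
    · intro c s _ _
      rw [Ideal.map_top]; trivial
    · intro d
      refine ⟨1, one_mem _, 0, ?_⟩
      rw [Ideal.map_top]; trivial
  by_cases hrad : I.IsRadical
  · obtain ⟨X, t, ht, hX1, hX2⟩ := generic (B := B) I hrad F
    refine step I t ht X hX1 hX2 δ hδ (ih _ ?_)
    refine lt_of_le_of_ne le_sup_left fun hEq => hI ?_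
    have h1 : t ∈ I := by
      rw [hEq]; exact Ideal.mem_sup_right (Ideal.mem_span_singleton_self t)
    exact (Ideal.eq_top_iff_one I).mpr (ht 1 (by simpa using h1))
  · rw [Ideal.isRadical_iff_pow_one_lt 2 (by norm_num)] at hrad
    push Not at hrad
    obtain ⟨x, hx2, hx⟩ := hrad
    have hlt : I < I ⊔ Ideal.span {x} := by
      refine lt_of_le_of_ne le_sup_left fun hEq => hx ?_
      rw [hEq]; exact Ideal.mem_sup_right (Ideal.mem_span_singleton_self x)
    obtain ⟨ℓ, Y, h1, h2⟩ := ih _ hlt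
    have hJJ : (I ⊔ Ideal.span {x}) * (I ⊔ Ideal.span {x}) ≤ I := by
      rw [Ideal.sup_mul]
      refine sup_le Ideal.mul_le_left ?_
      rw [Ideal.mul_sup]
      refine sup_le Ideal.mul_le_right ?_
      rw [Ideal.span_singleton_mul_span_singleton, Ideal.span_singleton_le_iff_mem, ← sq]
      exact hx2
    have : Module.Flat R (MvPolynomial (Fin ℓ) A) := Module.Flat.trans R A _
    exact ⟨ℓ, Y, nilp_LI hJJ hlt.le _ h1 h2, nilp_LS hJJ _ h2⟩

lemma main_poly {R B A ι : Type*} [CommRing R] [CommRing B] [CommRing A] [Algebra R B] [Algebra R A]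
    [Algebra B A] [IsScalarTower R B A] [IsNoetherianRing R] [Module.Flat R B]
    [Module.Flat R A] [Algebra.FiniteType R A] [IsNoetherianRing B] [Fintype ι]
    [DecidableEq ι] (δ : ι → Derivation B A A) (hδ : Spans δ)
    (F : ∀ (P : Ideal R) [P.IsPrime], ∃ X : ι → A,
      LI P.primeCompl P (ev R X : MvPolynomial ι B →ₐ[R] A) ∧
      LS P.primeCompl P (ev R X : MvPolynomial ι B →ₐ[R] A)) :
    ∃ ℓ : ℕ, Nonempty (MvPolynomial (Fin ℓ) A ≃ₐ[B] MvPolynomial (ι ⊕ Fin ℓ) B) := by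
  obtain ⟨ℓ, Y, h1, h2⟩ := main_ind δ hδ F ⊥
  refine ⟨ℓ, ⟨(AlgEquiv.ofBijective (MvPolynomial.aeval Y :
    MvPolynomial (ι ⊕ Fin ℓ) B →ₐ[B] MvPolynomial (Fin ℓ) A) ⟨?_, ?_⟩).symm⟩⟩
  · rw [injective_iff_map_eq_zero]
    intro c hc
    have := h1 c 1 rfl (by
      rw [map_one, one_mul, AlgHom.restrictScalars_apply, hc]; exact Ideal.zero_mem _)
    simpa using this
  · intro d
    obtain ⟨s, hs, c, hc⟩ := h2 d
    rw [Submonoid.mem_bot] at hs; subst hs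
    refine ⟨c, ?_⟩
    simp only [AlgHom.restrictScalars_apply, Ideal.map_bot, Ideal.mem_bot, map_one, one_mul,
      sub_eq_zero] at hc
    exact hc.symm

end ResVar
end

section
open TensorProduct
open scoped Matrix
namespace ResVar

lemma fibre_abs {R B A KB KA ι : Type*} [CommRing R] [CommRing B] [CommRing A] [Algebra R B]
    [Algebra R A] [Algebra B A] [IsScalarTower R B A] [CommRing KB] [CommRing KA] [Algebra R KB]
    [Algebra R KA] [Algebra KB KA] [IsScalarTower R KB KA] [Module.Flat R B] [Finite ι]
    (P : Ideal R) [P.IsPrime] (φB : B →ₐ[R] KB) (φA : A →ₐ[R] KA)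
    (comm : ∀ b, φA (algebraMap B A b) = algebraMap KB KA (φB b))
    (unit : ∀ s ∉ P, IsUnit (algebraMap R KB s))
    (zB : ∀ b, φB b = 0 → ∃ s ∉ P, algebraMap R B s * b ∈ P.map (algebraMap R B))
    (zA : ∀ b, φA b = 0 → ∃ s ∉ P, algebraMap R A s * b ∈ P.map (algebraMap R A))
    (zA' : ∀ a ∈ P.map (algebraMap R A), φA a = 0)
    (sB : ∀ x, ∃ s ∉ P, ∃ b, algebraMap R KB s * x = φB b)
    (sA : ∀ x, ∃ s ∉ P, ∃ b, algebraMap R KA s * x = φA b)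
    (e : KA ≃ₐ[KB] MvPolynomial ι KB) :
    ∃ X : ι → A, LI P.primeCompl P (ev R X : MvPolynomial ι B →ₐ[R] A) ∧
      LS P.primeCompl P (ev R X : MvPolynomial ι B →ₐ[R] A) := by
  choose s hs X hX using fun i => sA (e.symm (MvPolynomial.X i))
  refine ⟨X, ?_, ?_⟩
  · intro p s' hs' hp
    have h0 : φA (MvPolynomial.aeval X p) = 0 := by
      have h1 := zA' _ hp
      rw [map_mul, AlgHom.commutes, IsScalarTower.algebraMap_apply R KB KA] at h1
      exact ((unit s' hs').map (algebraMap KB KA)).mul_right_eq_zero.mp h1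
    let sc : MvPolynomial ι KB →ₐ[KB] MvPolynomial ι KB :=
      MvPolynomial.aeval fun i => MvPolynomial.C (algebraMap R KB (s i)) * MvPolynomial.X i
    have h1 : ∀ p : MvPolynomial ι B, e (φA (MvPolynomial.aeval X p)) =
        sc (MvPolynomial.map (φB : B →+* KB) p) := by
      intro p
      induction p using MvPolynomial.induction_on with
      | C b => simp [comm]
      | add p q hp hq => simp only [map_add, hp, hq]
      | mul_X p i hp =>
        simp only [map_mul, hp, MvPolynomial.aeval_X, MvPolynomial.map_X]
        rw [← hX, map_mul, AlgEquiv.apply_symm_apply, IsScalarTower.algebraMap_apply R KB KA,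
          AlgEquiv.commutes]
        simp [sc]
    have h2 : sc (MvPolynomial.map (φB : B →+* KB) p) = 0 := by rw [← h1, h0, map_zero]
    choose v hv using fun i => (unit (s i) (hs i)).exists_left_inv
    let sc' : MvPolynomial ι KB →ₐ[KB] MvPolynomial ι KB :=
      MvPolynomial.aeval fun i => MvPolynomial.C (v i) * MvPolynomial.X i
    have h3 : sc'.comp sc = AlgHom.id _ _ := by
      ext1 i
      simp only [sc, sc', AlgHom.comp_apply, MvPolynomial.aeval_X, map_mul, MvPolynomial.aeval_C,
        MvPolynomial.algebraMap_eq, AlgHom.id_apply]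
      rw [← mul_assoc, ← map_mul, mul_comm (algebraMap R KB (s i)), hv, map_one, one_mul]
    have h4 : MvPolynomial.map (φB : B →+* KB) p = 0 := by
      have := congrArg sc' h2
      rwa [← AlgHom.comp_apply, h3, map_zero, AlgHom.id_apply] at this
    rw [mem_map_poly]
    intro m
    have h5 : φB (p.coeff m) = 0 := by
      have := congrArg (MvPolynomial.coeff m) h4
      rwa [MvPolynomial.coeff_map, MvPolynomial.coeff_zero] at this
    obtain ⟨s1, hs1, h6⟩ := zB _ h5
    refine nz_of_flat ?_ h6
    intro x hx
    exact (Ideal.IsPrime.mem_or_mem ‹_› hx).resolve_left hs1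
  · have key : ∀ q : MvPolynomial ι KB, ∃ s ∉ P, ∃ p : MvPolynomial ι B,
        algebraMap R KA s * e.symm q = φA (MvPolynomial.aeval X p) := by
      intro q
      induction q using MvPolynomial.induction_on with
      | C b =>
        obtain ⟨s, hs, c, hc⟩ := sB b
        refine ⟨s, hs, MvPolynomial.C c, ?_⟩
        rw [MvPolynomial.aeval_C, comm, ← hc, ← MvPolynomial.algebraMap_eq, AlgEquiv.commutes,
          map_mul, ← IsScalarTower.algebraMap_apply]
      | add p q hp hq =>
        obtain ⟨s, hs, c, hc⟩ := hp
        obtain ⟨s', hs', c', hc'⟩ := hq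
        refine ⟨s * s', P.primeCompl.mul_mem hs hs', algebraMap R _ s' * c + algebraMap R _ s * c', ?_⟩
        simp only [map_add, map_mul]
        rw [← hc, ← hc']
        simp only [IsScalarTower.algebraMap_apply R B (MvPolynomial ι B),
          MvPolynomial.algebraMap_eq, MvPolynomial.aeval_C]
        simp only [← IsScalarTower.algebraMap_apply, AlgHom.commutes]
        ring
      | mul_X p i hp =>
        obtain ⟨s', hs', c', hc'⟩ := hp
        refine ⟨s' * s i, P.primeCompl.mul_mem hs' (hs i), c' * MvPolynomial.X i, ?_⟩
        rw [map_mul, map_mul, map_mul, map_mul, ← hc', MvPolynomial.aeval_X, ← hX]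
        ring
    intro d
    obtain ⟨s1, hs1, p, hp⟩ := key (e (φA d))
    rw [AlgEquiv.symm_apply_apply, ← AlgHom.commutes φA, ← map_mul, ← sub_eq_zero, ← map_sub] at hp
    obtain ⟨s2, hs2, h2⟩ := zA _ hp
    refine ⟨s2 * s1, P.primeCompl.mul_mem hs2 hs1, algebraMap R _ s2 * p, ?_⟩
    rw [map_mul, map_mul, AlgHom.commutes, mul_assoc, ← mul_sub]
    exact h2

section
variable {R : Type*} [CommRing R] (P : Ideal R) [P.IsPrime] {S : Type*} [CommRing S] [Algebra R S]

lemma fib_zero (a : S) (h : (1 : P.ResidueField) ⊗ₜ[R] a = 0) :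
    ∃ s ∉ P, algebraMap R S s * a ∈ P.map (algebraMap R S) := by
  let _ : Algebra S (P.Fiber S) := Algebra.TensorProduct.rightAlgebra
  have h1 := congrArg (Ideal.Fiber.algEquivAux₁ (S := S) P) h
  have h2 : (1 : P.ResidueField) ⊗ₜ[R] a = algebraMap S (P.Fiber S) a := rfl
  rw [h2, AlgEquiv.commutes, map_zero] at h1
  have h3 : algebraMap S (Localization (Algebra.algebraMapSubmonoid S P.primeCompl)) a ∈
    (P.map (algebraMap R S)).map
      (algebraMap S (Localization (Algebra.algebraMapSubmonoid S P.primeCompl))) :=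
    Ideal.Quotient.eq_zero_iff_mem.mp h1
  rw [IsLocalization.algebraMap_mem_map_algebraMap_iff
    (Algebra.algebraMapSubmonoid S P.primeCompl)] at h3
  obtain ⟨_, ⟨s, hs, rfl⟩, h4⟩ := h3
  exact ⟨s, hs, h4⟩

lemma fib_zero' (a : S) (h : a ∈ P.map (algebraMap R S)) :
    (1 : P.ResidueField) ⊗ₜ[R] a = 0 := by
  obtain ⟨n, i, d, hi, rfl⟩ := exists_sum_of_mem_map h
  rw [TensorProduct.tmul_sum]
  refine Finset.sum_eq_zero fun k _ => ?_
  rw [← Algebra.smul_def, ← TensorProduct.smul_tmul]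
  have : i k • (1 : P.ResidueField) = 0 := by
    rw [Algebra.smul_def, mul_one]
    exact Ideal.algebraMap_residueField_eq_zero.mpr (hi k)
  rw [this, TensorProduct.zero_tmul]

lemma fib_unit (s : R) (hs : s ∉ P) : IsUnit (algebraMap R (P.Fiber S) s) := by
  rw [IsScalarTower.algebraMap_apply R P.ResidueField (P.Fiber S)]
  apply IsUnit.map
  rw [isUnit_iff_ne_zero]
  intro h
  exact hs (Ideal.algebraMap_residueField_eq_zero.mp h)

end

lemma fibre_of {R B A : Type*} [CommRing R] [CommRing B] [CommRing A] [Algebra R B]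
    [Algebra R A] [Algebra B A] [IsScalarTower R B A] [Module.Flat R B] (r : ℕ)
    (P : Ideal R) [P.IsPrime]
    (h : letI : Algebra (P.ResidueField ⊗[R] B) (P.ResidueField ⊗[R] A) :=
        (Algebra.TensorProduct.map (AlgHom.id R P.ResidueField)
        (IsScalarTower.toAlgHom R B A)).toRingHom.toAlgebra
      Nonempty ((P.ResidueField ⊗[R] A) ≃ₐ[P.ResidueField ⊗[R] B]
        MvPolynomial (Fin r) (P.ResidueField ⊗[R] B))) :
    ∃ X : Fin r → A, LI P.primeCompl P (ev R X : MvPolynomial (Fin r) B →ₐ[R] A) ∧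
      LS P.primeCompl P (ev R X : MvPolynomial (Fin r) B →ₐ[R] A) := by
  let _ : Algebra (P.ResidueField ⊗[R] B) (P.ResidueField ⊗[R] A) :=
        (Algebra.TensorProduct.map (AlgHom.id R P.ResidueField)
        (IsScalarTower.toAlgHom R B A)).toRingHom.toAlgebra
  obtain ⟨e⟩ := h
  have : IsScalarTower R (P.ResidueField ⊗[R] B) (P.ResidueField ⊗[R] A) :=
    IsScalarTower.of_algebraMap_eq fun r => ((Algebra.TensorProduct.map (AlgHom.id R P.ResidueField)
        (IsScalarTower.toAlgHom R B A)).commutes r).symm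
  refine fibre_abs P (Algebra.TensorProduct.includeRight : B →ₐ[R] P.ResidueField ⊗[R] B)
    (Algebra.TensorProduct.includeRight : A →ₐ[R] P.ResidueField ⊗[R] A) ?_
    (fib_unit P) (fib_zero P) (fib_zero P) (fib_zero' P) ?_ ?_ e
  · intro b
    simp [RingHom.algebraMap_toAlgebra]
  · intro x
    obtain ⟨s, hs, b, hb⟩ := Ideal.Fiber.exists_smul_eq_one_tmul P x
    exact ⟨s, hs, b, by rw [← Algebra.smul_def, hb]; rfl⟩
  · intro x
    obtain ⟨s, hs, b, hb⟩ := Ideal.Fiber.exists_smul_eq_one_tmul P x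
    exact ⟨s, hs, b, by rw [← Algebra.smul_def, hb]; rfl⟩

end ResVar
end

section
open TensorProduct
open scoped Matrix
namespace ResVar

lemma fib_coord {R B A : Type*} [CommRing R] [CommRing B] [CommRing A] [Algebra R B]
    [Algebra R A] [Algebra B A] [IsScalarTower R B A] (r m : ℕ)
    (g : B ≃ₐ[R] MvPolynomial (Fin m) R)
    (P : Ideal R) [P.IsPrime]
    (h : letI : Algebra (P.ResidueField ⊗[R] B) (P.ResidueField ⊗[R] A) :=
        (Algebra.TensorProduct.map (AlgHom.id R P.ResidueField)
        (IsScalarTower.toAlgHom R B A)).toRingHom.toAlgebra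
      Nonempty ((P.ResidueField ⊗[R] A) ≃ₐ[P.ResidueField ⊗[R] B]
        MvPolynomial (Fin r) (P.ResidueField ⊗[R] B))) :
    ∃ c : P.ResidueField ⊗[R] A ≃ₐ[P.ResidueField] MvPolynomial (Fin r ⊕ Fin m) P.ResidueField,
      ∀ i, c (1 ⊗ₜ algebraMap B A (g.symm (MvPolynomial.X i))) = MvPolynomial.X (Sum.inr i) := by
  let _ : Algebra (P.ResidueField ⊗[R] B) (P.ResidueField ⊗[R] A) :=
        (Algebra.TensorProduct.map (AlgHom.id R P.ResidueField)
        (IsScalarTower.toAlgHom R B A)).toRingHom.toAlgebra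
  obtain ⟨e⟩ := h
  have : IsScalarTower P.ResidueField (P.ResidueField ⊗[R] B) (P.ResidueField ⊗[R] A) :=
    IsScalarTower.of_algebraMap_eq fun r => by
      simp [RingHom.algebraMap_toAlgebra, Algebra.TensorProduct.algebraMap_apply]
  let hh : P.ResidueField ⊗[R] B ≃ₐ[P.ResidueField] MvPolynomial (Fin m) P.ResidueField :=
    (Algebra.TensorProduct.congr AlgEquiv.refl g).trans (MvPolynomial.algebraTensorAlgEquiv R P.ResidueField)
  refine ⟨((e.restrictScalars P.ResidueField).trans (MvPolynomial.mapAlgEquiv (Fin r) hh)).trans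
    (MvPolynomial.sumAlgEquiv P.ResidueField (Fin r) (Fin m)).symm, fun i => ?_⟩
  have h1 : (1 : P.ResidueField) ⊗ₜ[R] algebraMap B A (g.symm (MvPolynomial.X i)) =
    algebraMap (P.ResidueField ⊗[R] B) _ (1 ⊗ₜ g.symm (MvPolynomial.X i)) := by
      simp [RingHom.algebraMap_toAlgebra]
  simp only [AlgEquiv.trans_apply]
  rw [AlgEquiv.symm_apply_eq, AlgEquiv.restrictScalars_apply, h1, AlgEquiv.commutes]
  simp [MvPolynomial.algebraMap_eq, hh]

lemma rank_eq {R A K ι : Type*} [CommRing R] [CommRing A] [Algebra R A] [Field K] [Algebra R K]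
    [Fintype ι] (c : K ⊗[R] A ≃ₐ[K] MvPolynomial ι K) (s t : ℕ)
    (e : (Ω[A⁄R] × (Fin s → A)) ≃ₗ[A] (Fin t → A)) : t = Fintype.card ι + s := by
  classical
  let _ : Algebra A (MvPolynomial ι K) :=
    ((c : K ⊗[R] A →+* MvPolynomial ι K).comp
      (Algebra.TensorProduct.includeRight : A →ₐ[R] K ⊗[R] A).toRingHom).toAlgebra
  have hal : ∀ a, algebraMap A (MvPolynomial ι K) a = c (1 ⊗ₜ a) := fun a => rfl
  have : IsScalarTower R A (MvPolynomial ι K) := IsScalarTower.of_algebraMap_eq fun x => by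
    rw [hal, IsScalarTower.algebraMap_apply R K (MvPolynomial ι K), ← c.commutes,
      Algebra.TensorProduct.algebraMap_apply, Algebra.algebraMap_eq_smul_one x,
      Algebra.algebraMap_eq_smul_one x, Algebra.algebraMap_self_apply, TensorProduct.smul_tmul]
  have : Algebra.IsPushout R K A (MvPolynomial ι K) := by
    constructor
    refine IsBaseChange.of_equiv c.toLinearEquiv ?_
    intro x
    rfl
  let S := MvPolynomial ι K
  have e1 := KaehlerDifferential.tensorKaehlerEquiv R K A S
  let e2 : (Ω[S⁄K] × (Fin s → S)) ≃ₗ[S] (Fin t → S) :=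
    (LinearEquiv.prodCongr e1.symm (TensorProduct.piScalarRight A S S (Fin s)).symm).trans
    ((TensorProduct.prodRight A S S _ _).symm.trans
      ((TensorProduct.AlgebraTensorModule.congr (LinearEquiv.refl S S) e).trans
      (TensorProduct.piScalarRight A S S (Fin t))))
  have b := KaehlerDifferential.mvPolynomialBasis K ι
  have h3 := e2.finrank_eq
  have : Module.Free S Ω[S⁄K] := Module.Free.of_basis b
  have : Module.Finite S Ω[S⁄K] := Module.Finite.of_basis b
  rw [Module.finrank_prod, Module.finrank_eq_card_basis b] at h3
  simpa using h3.symm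

end ResVar
end

section
open TensorProduct
open scoped Matrix
namespace ResVar

lemma lift_der {R A S : Type*} [CommRing R] [CommRing A] [CommRing S] [Algebra R A] [Algebra R S]
    [Algebra A S] [IsScalarTower R A S] (P : Ideal R) [P.IsPrime] (s t : ℕ)
    (e : (Ω[A⁄R] × (Fin s → A)) ≃ₗ[A] (Fin t → A))
    (sA : ∀ x : S, ∃ s ∉ P, ∃ b, algebraMap R S s * x = algebraMap A S b)
    (d : Derivation R A S) : ∃ s ∉ P, ∃ D : Derivation R A A,
      ∀ a, algebraMap A S (D a) = algebraMap R S s * d a := by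
  classical
  let ψ : (Fin t → A) →ₗ[A] S :=
    d.liftKaehlerDifferential ∘ₗ LinearMap.fst A _ _ ∘ₗ e.symm.toLinearMap
  choose σ hσ z hz using fun k => sA (ψ (Pi.single k 1))
  let D : Derivation R A A := (((Fintype.linearCombination A
    (fun k => algebraMap R A (∏ j ∈ Finset.univ.erase k, σ j) * z k)) ∘ₗ e.toLinearMap ∘ₗ
      LinearMap.inl A _ _)).compDer (KaehlerDifferential.D R A)
  refine ⟨∏ k, σ k, P.primeCompl.prod_mem fun k _ => hσ k, D, fun a => ?_⟩
  have h1 : d a = ψ (e (KaehlerDifferential.D R A a, 0)) := by simp [ψ]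
  have h2 : ψ (e (KaehlerDifferential.D R A a, 0)) =
    ∑ k, algebraMap A S (e (KaehlerDifferential.D R A a, 0) k) * ψ (Pi.single k 1) := by
    conv_lhs => rw [pi_eq_sum_univ' (e (KaehlerDifferential.D R A a, 0))]
    rw [map_sum]
    refine Finset.sum_congr rfl fun k _ => ?_
    rw [map_smul, Algebra.smul_def]
  rw [h1, h2, Finset.mul_sum]
  have h3 : D a = ∑ k, e (KaehlerDifferential.D R A a, 0) k *
    (algebraMap R A (∏ j ∈ Finset.univ.erase k, σ j) * z k) := by
    simp [D, Fintype.linearCombination_apply]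
  rw [h3, map_sum]
  refine Finset.sum_congr rfl fun k _ => ?_
  rw [map_mul, map_mul, ← hz, ← IsScalarTower.algebraMap_apply,
    ← Finset.mul_prod_erase _ _ (Finset.mem_univ k), map_mul]
  ring

lemma exists_dual {R A : Type*} [CommRing R] [CommRing A] [Algebra R A] {m : ℕ} (W : Fin m → A)
    (H : ∀ q : Ideal A, q.IsMaximal → ∃ D : Fin m → Derivation R A A, ∃ s : Fin m → A,
      (∀ i, s i ∉ q) ∧ ∀ i j, D i (W j) - (if i = j then s i else 0) ∈ q) :
    ∃ D : Fin m → Derivation R A A, ∀ i j, D i (W j) = if i = j then 1 else 0 := by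
  classical
  let f : Derivation R A A →ₗ[A] (Fin m → A) :=
    { toFun := fun D j => D (W j)
      map_add' := fun _ _ => rfl
      map_smul' := fun _ _ => rfl }
  let N := LinearMap.range f
  let J : Ideal A :=
    ⨅ i, N.comap (LinearMap.toSpanSingleton A (Fin m → A) (Pi.single i 1))
  have hJ : J = ⊤ := by
    by_contra hne
    obtain ⟨q, hq, hle⟩ := Ideal.exists_le_maximal J hne
    obtain ⟨D, s, hs, hD⟩ := H q hq
    let M : Matrix (Fin m) (Fin m) A := Matrix.of fun i j => D i (W j)
    have h1 : M.det ∈ J := by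
      simp only [J, Submodule.mem_iInf, Submodule.mem_comap]
      intro i
      refine ⟨∑ k, M.adjugate i k • D k, ?_⟩
      rw [map_sum]
      ext j
      have := congrFun (congrFun (Matrix.adjugate_mul M) i) j
      rw [Matrix.mul_apply] at this
      simp only [map_smul, Finset.sum_apply, Pi.smul_apply, smul_eq_mul]
      refine this.trans ?_
      simp [Matrix.one_apply, Pi.single_apply, eq_comm]
    have h2 := hle h1
    rw [← Ideal.Quotient.eq_zero_iff_mem, RingHom.map_det] at h2
    have h3 : (Ideal.Quotient.mk q).mapMatrix M =
        Matrix.diagonal fun i => Ideal.Quotient.mk q (s i) := by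
      ext i j
      have := Ideal.Quotient.eq.mpr (hD i j)
      simp only [RingHom.mapMatrix_apply, Matrix.map_apply, M, Matrix.of_apply, this,
        Matrix.diagonal_apply]
      split_ifs <;> simp
    rw [h3, Matrix.det_diagonal, Finset.prod_eq_zero_iff] at h2
    obtain ⟨i, -, hi⟩ := h2
    exact hs i (Ideal.Quotient.eq_zero_iff_mem.mp hi)
  have h1 : (1 : A) ∈ J := by rw [hJ]; trivial
  simp only [J, Submodule.mem_iInf, Submodule.mem_comap] at h1
  choose D hD using h1
  refine ⟨D, fun i j => ?_⟩
  have := congrFun (hD i) j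
  simp only [f, LinearMap.coe_mk, AddHom.coe_mk] at this
  rw [this]
  simp [Pi.single_apply, eq_comm]

lemma split {R A : Type*} [CommRing R] [CommRing A] [Algebra R A] {m r : ℕ} (W : Fin m → A)
    (s t : ℕ) (e : (Ω[A⁄R] × (Fin s → A)) ≃ₗ[A] (Fin t → A))
    (H : ∀ (P : Ideal R) [P.IsPrime], ∃ c : P.ResidueField ⊗[R] A ≃ₐ[P.ResidueField]
      MvPolynomial (Fin r ⊕ Fin m) P.ResidueField,
      ∀ i, c (1 ⊗ₜ W i) = MvPolynomial.X (Sum.inr i)) :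
    ∃ D : Fin m → Derivation R A A, ∀ i j, D i (W j) = if i = j then 1 else 0 := by
  classical
  refine exists_dual W fun q hq => ?_
  have : q.IsPrime := hq.isPrime
  let P := q.comap (algebraMap R A)
  obtain ⟨c, hc⟩ := H P
  let S := MvPolynomial (Fin r ⊕ Fin m) P.ResidueField
  let _ : Algebra A S :=
    ((c : P.ResidueField ⊗[R] A →+* S).comp
      (Algebra.TensorProduct.includeRight : A →ₐ[R] P.ResidueField ⊗[R] A).toRingHom).toAlgebra
  have hal : ∀ a, algebraMap A S a = c (1 ⊗ₜ a) := fun a => rfl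
  have : IsScalarTower R A S := IsScalarTower.of_algebraMap_eq fun x => by
    rw [hal, IsScalarTower.algebraMap_apply R P.ResidueField S, ← c.commutes,
      Algebra.TensorProduct.algebraMap_apply, Algebra.algebraMap_eq_smul_one x,
      Algebra.algebraMap_eq_smul_one x, Algebra.algebraMap_self_apply, TensorProduct.smul_tmul]
  have sA : ∀ x : S, ∃ s ∉ P, ∃ b, algebraMap R S s * x = algebraMap A S b := by
    intro x
    obtain ⟨s, hs, b, hb⟩ := Ideal.Fiber.exists_smul_eq_one_tmul P (c.symm x)
    refine ⟨s, hs, b, ?_⟩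
    rw [hal, ← hb, ← algebraMap_smul P.ResidueField s (c.symm x), map_smul,
      AlgEquiv.apply_symm_apply, algebraMap_smul, Algebra.smul_def]
  choose σ hσ D hD using fun i : Fin m => lift_der P s t e sA
    (((MvPolynomial.pderiv (R := P.ResidueField) (Sum.inr i : Fin r ⊕ Fin m)).restrictScalars R).compAlgebraMap A)
  refine ⟨D, fun i => algebraMap R A (σ i), fun i => hσ i, fun i j => ?_⟩
  have h1 : algebraMap A S (D i (W j) - if i = j then algebraMap R A (σ i) else 0) = 0 := by
    have hd : (((MvPolynomial.pderiv (R := P.ResidueField)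
        (Sum.inr i : Fin r ⊕ Fin m)).restrictScalars R).compAlgebraMap A) (W j) =
        (Pi.single (Sum.inr i : Fin r ⊕ Fin m) 1 : Fin r ⊕ Fin m → S) (Sum.inr j) := by
      change MvPolynomial.pderiv (Sum.inr i : Fin r ⊕ Fin m) (c (1 ⊗ₜ W j)) = _
      rw [hc, MvPolynomial.pderiv_X]
    rw [map_sub, hD, hd]
    by_cases hij : i = j
    · subst hij
      simp only [Pi.single_eq_same, if_true]
      rw [← IsScalarTower.algebraMap_apply, mul_one, sub_self]
    · have : (Sum.inr j : Fin r ⊕ Fin m) ≠ Sum.inr i := fun h => hij (Sum.inr.inj h).symm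
      rw [Pi.single_eq_of_ne this, if_neg hij, map_zero, mul_zero, sub_zero]
  have h2 : (1 : P.ResidueField) ⊗ₜ[R] (D i (W j) - if i = j then algebraMap R A (σ i) else 0) = 0 := by
    rw [hal] at h1
    exact c.injective (h1.trans (map_zero c).symm)
  obtain ⟨u, hu, hm⟩ := fib_zero P _ h2
  have h3 := (Ideal.map_comap_le (f := algebraMap R A) (K := q)) hm
  exact (Ideal.IsPrime.mem_or_mem ‹_› h3).resolve_left hu

end ResVar
end

section
open TensorProduct
open scoped Matrix
namespace ResVar

lemma final {R A : Type*} [CommRing R] [Nontrivial R] [IsNoetherianRing R] [CommRing A] [Algebra R A]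
    [Algebra.FiniteType R A] [Module.Flat R A]
    {m r : ℕ} (W : Fin m → A) (hW : AlgebraicIndependent R W)
    (s t : ℕ) (e : (Ω[A⁄R] × (Fin s → A)) ≃ₗ[A] (Fin t → A))
    (H : ∀ (P : Ideal R) [P.IsPrime],
      letI : Algebra (P.ResidueField ⊗[R] (Algebra.adjoin R (Set.range W))) (P.ResidueField ⊗[R] A) :=
        (Algebra.TensorProduct.map (AlgHom.id R P.ResidueField)
        (IsScalarTower.toAlgHom R (Algebra.adjoin R (Set.range W)) A)).toRingHom.toAlgebra
      Nonempty ((P.ResidueField ⊗[R] A) ≃ₐ[P.ResidueField ⊗[R] (Algebra.adjoin R (Set.range W))]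
        MvPolynomial (Fin r) (P.ResidueField ⊗[R] (Algebra.adjoin R (Set.range W))))) :
    ∃ ℓ : ℕ,
      Nonempty (MvPolynomial (Fin ℓ) A ≃ₐ[↥(Algebra.adjoin R (Set.range W))]
        MvPolynomial (Fin (r + ℓ)) ↥(Algebra.adjoin R (Set.range W))) := by
  classical
  let B := Algebra.adjoin R (Set.range W)
  have hc : ∀ (P : Ideal R) [P.IsPrime], ∃ c : P.ResidueField ⊗[R] A ≃ₐ[P.ResidueField]
      MvPolynomial (Fin r ⊕ Fin m) P.ResidueField,
      ∀ i, c (1 ⊗ₜ W i) = MvPolynomial.X (Sum.inr i) := by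
    intro P _
    obtain ⟨c, hc⟩ := fib_coord r m hW.aevalEquiv.symm P (H P)
    refine ⟨c, fun i => ?_⟩
    rw [← hc i]
    congr 2
    simp
  have ht : t = r + m + s := by
    obtain ⟨P, hP⟩ := Ideal.exists_maximal R
    have := hP.isPrime
    obtain ⟨c, -⟩ := hc P
    simpa using rank_eq c s t e
  obtain ⟨D, hD⟩ := split W s t e hc
  have : Module.Flat R B := Module.Flat.of_linearEquiv hW.aevalEquiv.symm.toLinearEquiv
  have : IsNoetherianRing B := isNoetherianRing_of_ringEquiv _ hW.aevalEquiv.toRingEquiv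
  let σ := Fin m ⊕ Fin s
  have hτ : Nonempty (Fin r ⊕ σ ≃ Fin t) := by
    refine ⟨Fintype.equivOfCardEq ?_⟩
    simp [σ, ht, add_assoc]
  obtain ⟨τ⟩ := hτ
  let e' : (Ω[A⁄R] × (Fin s → A)) ≃ₗ[A] (Fin r ⊕ σ → A) := e.trans (LinearEquiv.funCongrLeft A A τ)
  let dd := KaehlerDifferential.D R A
  -- projection
  let π : Ω[A⁄R] →ₗ[A] Ω[A⁄R] :=
    LinearMap.id - ∑ i, (D i).liftKaehlerDifferential.smulRight (dd (W i))
  have hπ : ∀ a, π (dd a) = dd a - ∑ i, D i a • dd (W i) := by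
    intro a
    simp [π, dd]
  have hπW : ∀ j, π (dd (W j)) = 0 := by
    intro j
    simp [hπ, hD]
  let Δ0 : Fin r ⊕ σ → Derivation R A A := fun k =>
    (LinearMap.proj k ∘ₗ e'.toLinearMap ∘ₗ LinearMap.inl A _ _ ∘ₗ π).compDer dd
  have hΔ0 : ∀ k a, Δ0 k a = e' (π (dd a), 0) k := fun k a => rfl
  have hΔB : ∀ k (b : B), Δ0 k (b : A) = 0 := by
    intro k b
    have h1 : Set.EqOn (Δ0 k) (0 : Derivation R A A) (Set.range W) := by
      rintro _ ⟨j, rfl⟩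
      rw [hΔ0, hπW]
      change e' 0 k = 0
      rw [map_zero, Pi.zero_apply]
    exact Derivation.eqOn_adjoin h1 b.2
  let Δ : Fin r ⊕ σ → Derivation B A A := fun k =>
    { toFun := Δ0 k
      map_add' := map_add _
      map_smul' := fun b a => by
        rw [Algebra.smul_def, Derivation.leibniz]
        change (b : A) • Δ0 k a + a • Δ0 k (b : A) = _
        rw [hΔB, smul_zero, add_zero]
        rfl
      map_one_eq_zero' := (Δ0 k).map_one_eq_zero
      leibniz' := (Δ0 k).leibniz }
  let w : σ → (Fin r ⊕ σ → A) := Sum.elim (fun i => e' (dd (W i), 0))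
    (fun j => e' (0, Pi.single j 1))
  have hsp : Submodule.span A (Set.range (fun a => fun j => Δ j a) ∪ Set.range w) = ⊤ := by
    set N := Submodule.span A (Set.range (fun a => fun j => Δ j a) ∪ Set.range w)
    have h1 : (⊤ : Submodule A Ω[A⁄R]) ≤ N.comap (e'.toLinearMap ∘ₗ LinearMap.inl A _ _) := by
      rw [← KaehlerDifferential.span_range_derivation, Submodule.span_le]
      rintro _ ⟨a, rfl⟩
      change e' (dd a, 0) ∈ N
      have h2 : dd a = π (dd a) + ∑ i, D i a • dd (W i) := by rw [hπ]; abel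
      have h3 : e' (dd a, 0) = (fun j => Δ j a) + ∑ i, D i a • w (Sum.inl i) := by
        change (e'.toLinearMap ∘ₗ LinearMap.inl A _ _) (dd a) = _
        rw [h2, map_add, map_sum]
        congr 1
        refine Finset.sum_congr rfl fun i _ => ?_
        rw [map_smul]
        rfl
      rw [h3]
      refine add_mem (Submodule.subset_span (Or.inl ⟨a, rfl⟩)) (Submodule.sum_mem _ fun i _ =>
        Submodule.smul_mem _ _ (Submodule.subset_span (Or.inr ⟨_, rfl⟩)))
    rw [eq_top_iff]
    intro v _
    obtain ⟨⟨x, y⟩, rfl⟩ := e'.surjective v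
    have h2 : e' (x, y) = e' (x, 0) + ∑ j, y j • w (Sum.inr j) := by
      have : (x, y) = (x, 0) + ∑ j, y j • ((0, Pi.single j 1) : Ω[A⁄R] × (Fin s → A)) := by
        refine Prod.ext ?_ ?_
        · simp [Prod.fst_sum]
        · ext k
          simp [Prod.snd_sum, Pi.single_apply]
      rw [this, map_add, map_sum]
      simp only [map_smul]
      rfl
    rw [h2]
    refine add_mem (h1 (x := x) trivial) (Submodule.sum_mem _ fun i _ =>
        Submodule.smul_mem _ _ (Submodule.subset_span (Or.inr ⟨_, rfl⟩)))
  obtain ⟨δ, hδ⟩ := exists_spans Δ w hsp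
  have : Module.Flat R (MvPolynomial σ A) := Module.Flat.trans R A _
  have : Algebra.FiniteType R (MvPolynomial σ A) := Algebra.FiniteType.trans (S := A) ‹_› inferInstance
  obtain ⟨ℓ, ⟨E⟩⟩ := main_poly (R := R) (B := B) (A := MvPolynomial σ A) δ hδ (by
    intro P _
    obtain ⟨X, h1, h2⟩ := fibre_of (B := B) r P (H P)
    exact ⟨adj X, adj_LI X h1, adj_LS X h2⟩)
  let L := Fintype.card (Fin ℓ ⊕ σ)
  let f1 : MvPolynomial (Fin ℓ) (MvPolynomial σ A) ≃ₐ[B] MvPolynomial (Fin L) A :=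
    ((MvPolynomial.sumAlgEquiv A (Fin ℓ) σ).symm.restrictScalars B).trans
      ((MvPolynomial.renameEquiv A (Fintype.equivFin _)).restrictScalars B)
  have g : (Fin r ⊕ σ) ⊕ Fin ℓ ≃ Fin (r + L) := by
    apply Fintype.equivOfCardEq
    simp [L, σ]
    ring
  exact ⟨L, ⟨f1.symm.trans (E.trans (MvPolynomial.renameEquiv B g))⟩⟩

end ResVar
end

/-- (Main theorem.)  Let `R` be a Noetherian ring and `A` an `𝔸ⁿ`-fibration over `R`
such that `Ω_R(A)` is a stably free `A`-module.  If `W` is an `m`-tuple residual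
variable of `A` over `R`, then `A^[ℓ] = R[W]^[n-m+ℓ]` for some `ℓ`; in particular `A`
is a stably polynomial algebra over `R[W]`. -/
theorem stablyPolynomial_of_residualVariable_of_stablyFree_kaehler
    (R A : Type*) [CommRing R] [IsNoetherianRing R] [CommRing A] [Algebra R A]
    (n m : ℕ) (hA : IsAffineFibration R A n)
    (hΩ : IsStablyFree A (KaehlerDifferential R A))
    (W : Fin m → A) (hW : IsResidualVariable R A n m W) :
    ∃ ℓ : ℕ,
      Nonempty (MvPolynomial (Fin ℓ) A ≃ₐ[↥(Algebra.adjoin R (Set.range W))]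
        MvPolynomial (Fin (n - m + ℓ)) ↥(Algebra.adjoin R (Set.range W))) := by
  obtain ⟨hft, hfl, -⟩ := hA
  obtain ⟨s, t, ⟨e⟩⟩ := hΩ
  obtain ⟨hW1, hW2⟩ := hW
  rcases subsingleton_or_nontrivial R with hR | hR
  · have : Subsingleton A := RingHom.codomain_trivial (algebraMap R A)
    have hB : Subsingleton (Algebra.adjoin R (Set.range W)) :=
      ⟨fun x y => Subtype.ext (Subsingleton.elim _ _)⟩
    have hP : Subsingleton (MvPolynomial (Fin (n - m + 0)) (Algebra.adjoin R (Set.range W))) :=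
      RingHom.codomain_trivial (MvPolynomial.C (σ := Fin (n - m + 0))
        (R := Algebra.adjoin R (Set.range W)))
    have hQ : Subsingleton (MvPolynomial (Fin 0) A) :=
      RingHom.codomain_trivial (MvPolynomial.C (σ := Fin 0) (R := A))
    exact ⟨0, ⟨{
      toFun := fun _ => 0
      invFun := fun _ => 0
      left_inv := fun _ => Subsingleton.elim _ _
      right_inv := fun _ => Subsingleton.elim _ _
      map_mul' := fun _ _ => Subsingleton.elim _ _
      map_add' := fun _ _ => Subsingleton.elim _ _
      commutes' := fun _ => Subsingleton.elim _ _ }⟩⟩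
  · exact ResVar.final W hW1 s t e fun P hP => hW2 P hP
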